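/- Consider the Curie–Weiss model with dichotomous external field, i.e. ν = (1/2)(δ_h + δ_{−h}) with h ≥ 1/2. Then 0 is the unique global minimum of G(x) = (β/2)x² − (1/2) ln[cosh(β(x+h)) cosh(β(x−h))], it is of type 1 with strength λ₁ = β − β²(1 − tanh(βh)²), and for μ-almost every realization h and every α with 1/2 < α < 1, the sequence of laws of S_n/n^α under P_{n,β}^h satisfies a moderate deviations principle with speed n^{2α−1} and rate function I(x) = x²/(2σ₁²), where σ₁² = (1 − tanh(βh)²)/(1 − β(1 − tanh(βh)²)). -/

import Mathlib

open MeasureTheory ProbabilityTheory Real Filter Topology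
open scoped ENNReal NNReal

noncomputable section

/-- The value of a spin encoded as a Boolean. -/
def spin (b : Bool) : ℝ := if b then 1 else -1

/-- Total magnetization of a configuration. -/
def mag {n : ℕ} (σ : Fin n → Bool) : ℝ := ∑ i, spin (σ i)

/-- Gibbs weight of a configuration in the random field Curie-Weiss model. -/
def gibbsWeight (β : ℝ) (h : ℕ → ℝ) (n : ℕ) (σ : Fin n → Bool) : ℝ :=
  Real.exp (β / (2 * n) * (mag σ) ^ 2 + β * ∑ i : Fin n, h i * spin (σ i))

/-- The random field Curie-Weiss Gibbs measure on configurations. -/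
def gibbsMeasure (β : ℝ) (h : ℕ → ℝ) (n : ℕ) : Measure (Fin n → Bool) :=
  (ENNReal.ofReal (∑ σ : Fin n → Bool, gibbsWeight β h n σ))⁻¹ •
    ∑ σ : Fin n → Bool, ENNReal.ofReal (gibbsWeight β h n σ) • Measure.dirac σ

/-- `μ` is the infinite product of `ν` over `ℕ` (characterised by finite marginals). -/
def IsProductMeasure (ν : Measure ℝ) (μ : Measure (ℕ → ℝ)) : Prop :=
  ∀ n : ℕ, μ.map (fun h (i : Fin n) => h (i : ℕ)) = Measure.pi fun _ : Fin n => ν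

/-- extended logarithm, `elog 0 = ⊥`, `elog ⊤ = ⊤`. -/
def elog (x : ℝ≥0∞) : EReal :=
  if x = 0 then ⊥ else if x = ⊤ then ⊤ else ((Real.log x.toReal : ℝ) : EReal)

/-- A sequence of measures satisfies a large deviations principle with given speed and
rate function. -/
def HasLDP (P : ℕ → Measure ℝ) (speed : ℕ → ℝ) (I : ℝ → ℝ≥0∞) : Prop :=
  LowerSemicontinuous I ∧ (∀ c : ℝ, IsCompact {x : ℝ | I x ≤ ENNReal.ofReal c}) ∧
    ∀ C : Set ℝ, MeasurableSet C →
      -(⨅ x ∈ interior C, (I x : EReal)) ≤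
          liminf (fun n => ((((speed n)⁻¹ : ℝ) : EReal)) * elog (P n C)) atTop ∧
        limsup (fun n => ((((speed n)⁻¹ : ℝ) : EReal)) * elog (P n C)) atTop ≤
          -(⨅ x ∈ closure C, (I x : EReal))

/-- The function `G` of the random field Curie-Weiss model. -/
def G (β : ℝ) (ν : Measure ℝ) (x : ℝ) : ℝ :=
  β / 2 * x ^ 2 - ∫ h, Real.log (Real.cosh (β * (x + h))) ∂ν

/-- The finite-volume function `G_n^h`. -/
def Gn (β : ℝ) (h : ℕ → ℝ) (n : ℕ) (x : ℝ) : ℝ :=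
  β / 2 * x ^ 2 - (1 / n) * ∑ i : Fin n, Real.log (Real.cosh (β * (x + h i)))

/-- `m` is a (local or global) minimum of `G` of type `k` and strength `l`. -/
def IsMinOfType (β : ℝ) (ν : Measure ℝ) (m : ℝ) (k : ℕ) (l : ℝ) : Prop :=
  1 ≤ k ∧ 0 < l ∧ (∀ i : ℕ, 1 ≤ i → i ≤ 2 * k - 1 → iteratedDeriv i (G β ν) m = 0) ∧
    iteratedDeriv (2 * k) (G β ν) m = l

/-- The height of a minimum `m` of `G`. -/
def height (β : ℝ) (ν : Measure ℝ) (m : ℝ) : ℝ := G β ν m - ⨅ w, G β ν w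

/-- The broadness of a minimum `m` of `G`. -/
def broadness (β : ℝ) (ν : Measure ℝ) (m : ℝ) : ℝ :=
  sInf ((fun y => |y - m|) '' {y | G β ν y < G β ν m})

/-- The moderate deviations rate function. -/
def mdpRate (β l : ℝ) (k : ℕ) (x : ℝ) : ℝ≥0∞ :=
  if k = 1 then ENNReal.ofReal (x ^ 2 / (2 * (l⁻¹ - β⁻¹)))
  else ENNReal.ofReal (l * x ^ (2 * k) / (Nat.factorial (2 * k)))

/-- The polynomial `P_{2k}`. -/
def P2k (l : ℝ) (k : ℕ) (s : ℝ) : ℝ :=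
  l / (2 * (Nat.factorial (2 * k))) * s ^ (2 * k) - ∑ i ∈ Finset.Icc 1 (2 * k - 1), |s| ^ i




lemma cw_cosh_superadd (y q p : ℝ) (h : y ^ 2 + q ^ 2 = p ^ 2) :
    cosh y + cosh q ≤ 1 + cosh p := by
  have h1 := (Real.hasSum_cosh y).add (Real.hasSum_cosh q)
  have h2 : HasSum (fun n : ℕ => (if n = 0 then (1:ℝ) else 0) + p ^ (2 * n) / ((2 * n).factorial : ℝ))
      (1 + cosh p) := (hasSum_ite_eq 0 (1:ℝ)).add (Real.hasSum_cosh p)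
  refine hasSum_le ?_ h1 h2
  intro n
  rcases Nat.eq_zero_or_pos n with rfl | hn
  · simp
  · have hn' : n ≠ 0 := hn.ne'
    simp only [hn', if_false, zero_add]
    rw [← add_div]
    gcongr
    rw [pow_mul, pow_mul, pow_mul, ← h]
    exact pow_add_pow_le (sq_nonneg _) (sq_nonneg _) hn'

lemma cw_sinh_gm (Y a b : ℝ) (h : Y ^ 2 = a * b) : sinh Y ^ 2 ≤ sinh a * sinh b := by
  have h1 := cw_cosh_superadd (2 * Y) (a - b) (a + b) (by rw [mul_pow, h]; ring)
  rw [Real.cosh_two_mul, Real.cosh_sq, Real.cosh_add, Real.cosh_sub] at h1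
  linarith

/-- Region A. -/
lemma cw_regA (u v Y : ℝ) (hu : 0 < u) (hv : 0 < v) (hY : Y ^ 2 = u * v)
    (h : exp u < 2 * exp v + 1) :
    sinh Y ^ 2 < (exp v - 1) * cosh (u / 2) ^ 2 := by
  refine (cw_sinh_gm Y u v hY).trans_lt ?_
  rw [Real.cosh_sq' (u/2)]
  have : u = 2 * (u / 2) := by ring
  have hE : (1:ℝ) < exp v := by simpa using hv
  have hU : (1:ℝ) < exp (u/2) := by simpa using hu
  have e1 : exp u = exp (u/2) ^ 2 := by rw [← Real.exp_nat_mul]; congr 1 <;> (push_cast; ring)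
  rw [Real.sinh_eq u, Real.sinh_eq v, Real.sinh_eq (u/2), Real.exp_neg, Real.exp_neg, Real.exp_neg, e1]
  rw [e1] at h
  generalize exp v = E at *
  generalize exp (u/2) = U at *
  have hE0 : 0 < E := by linarith
  have hU0 : 0 < U := by linarith
  rw [← sub_pos]
  have : (E - 1) * (1 + ((U - U⁻¹) / 2) ^ 2) - (U ^ 2 - (U ^ 2)⁻¹) / 2 * ((E - E⁻¹) / 2)
    = (E - 1) * (U ^ 2 + 1) * (2 * E + 1 - U ^ 2) / (4 * U ^ 2 * E) := by
    field_simp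
    ring
  rw [this]
  have : 0 < E - 1 := by linarith
  have : 0 < 2 * E + 1 - U^2 := by linarith
  positivity

/-- Region B. -/
lemma cw_regB (u v Y : ℝ) (hu : 0 < u) (hv : 0 < v) (hY : Y ^ 2 = u * v)
    (h : exp v ≤ 2.41) :
    sinh Y ^ 2 < (exp v - 1) * cosh (u / 2) ^ 2 := by
  refine (cw_sinh_gm Y (u/2) (2*v) (by rw [hY]; ring)).trans_lt ?_
  rw [Real.cosh_sq' (u/2)]
  have hE : (1:ℝ) < exp v := by simpa using hv
  have hS : 0 < sinh (u/2) := by rw [Real.sinh_pos_iff]; linarith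
  have e1 : exp (2 * v) = exp v ^ 2 := by rw [← Real.exp_nat_mul]; congr 1
  rw [Real.sinh_eq (2*v), Real.exp_neg, e1]
  generalize exp v = E at *
  generalize sinh (u/2) = S at *
  have hE0 : 0 < E := by linarith
  have h1 : (E ^ 2 - (E ^ 2)⁻¹) / 2 < 2 * (E - 1) := by
    rw [← sub_pos]
    have : 2 * (E - 1) - (E ^ 2 - (E ^ 2)⁻¹) / 2 = (E - 1) ^ 2 * (2 * E + 1 - E ^ 2) / (2 * E ^ 2) := by
      field_simp
      ring
    rw [this]
    have : 0 < E - 1 := by linarith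
    have : 0 < 2 * E + 1 - E^2 := by nlinarith
    positivity
  nlinarith [sq_nonneg (S - 1), mul_lt_mul_of_pos_left h1 hS, mul_nonneg (by linarith : 0 ≤ E - 1) (sq_nonneg (S - 1))]

lemma cw_rho (X : ℝ) (hX : 1 < X) : 2.214 * (X * (X ^ 6 - 1)) ≤ (X ^ 4 + 1) ^ 2 := by
  rcases le_total 1.73 X with h | h
  · obtain ⟨t, rfl⟩ : ∃ t, X = 1.73 + t := ⟨X - 1.73, by ring⟩
    have ht : 0 ≤ t := by linarith
    have : 0 ≤ t ^ 3 := by positivity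
    have : 0 ≤ t ^ 4 := by positivity
    have : 0 ≤ t ^ 5 := by positivity
    have : 0 ≤ t ^ 6 := by positivity
    have : 0 ≤ t ^ 7 := by positivity
    have : 0 ≤ t ^ 8 := by positivity
    norm_num
    ring_nf
    nlinarith [sq_nonneg (t - 0.01)]
  · obtain ⟨s, rfl⟩ : ∃ s, X = 1.73 - s := ⟨1.73 - X, by ring⟩
    have hs0 : 0 ≤ s := by linarith
    have hs1 : s ≤ 0.73 := by norm_num at hX ⊢; linarith
    have q1 : 0 ≤ s ^ 2 * (66 - 187.6 * s + 227.7 * s ^ 2 - 150.9 * s ^ 3 + 44 * s ^ 4) := by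
      have : 0 ≤ 66 - 187.6 * s + 227.7 * s ^ 2 - 150.9 * s ^ 3 + 44 * s ^ 4 := by
        norm_num at hs1 ⊢
        nlinarith [sq_nonneg (s ^ 2 - 1.7 * s + 0.6), sq_nonneg (s - 0.6), sq_nonneg (s-0.7), mul_nonneg hs0 (sub_nonneg.2 hs1)]
      positivity
    have q2 : 0 ≤ s ^ 6 * (12 - 11.63 * s) := by
      have : 0 ≤ 12 - 11.63 * s := by norm_num at hs1 ⊢; linarith
      positivity
    have : 0 ≤ s ^ 8 := by positivity
    have : 0 ≤ s ^ 2 := by positivity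
    have : 0 ≤ s ^ 3 := by positivity
    have : 0 ≤ s ^ 4 := by positivity
    have : 0 ≤ s ^ 5 := by positivity
    have : s ^ 6 ≤ s ^ 4 := pow_le_pow_of_le_one hs0 (by norm_num at hs1 ⊢; linarith) (by norm_num)
    have : 0 ≤ s ^ 6 := by positivity
    norm_num at q1 q2 ⊢
    ring_nf at q1 q2 ⊢
    nlinarith

lemma cw_kappa (Z : ℝ) (h1 : 1.34 ≤ Z) (h2 : Z ≤ 1.9) :
    (Z + 1) * (Z ^ 2 + 1) * (Z ^ 4 + 1) < 2.214 * (Z ^ 4 * (Z ^ 2 + Z + 1)) := by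
  obtain ⟨s, rfl⟩ : ∃ s, Z = 1.9 - s := ⟨1.9 - Z, by ring⟩
  have hs0 : 0 ≤ s := by linarith
  have hs1 : s ≤ 0.56 := by norm_num at h1 ⊢; linarith
  have q1 : 0 ≤ s * (52 - 180 * s + 237 * s ^ 2 - 162 * s ^ 3 + 53.9 * s ^ 4) := by
    have : 0 ≤ 52 - 180 * s + 237 * s ^ 2 - 162 * s ^ 3 + 53.9 * s ^ 4 := by
      norm_num at hs1 ⊢
      nlinarith [sq_nonneg (s ^ 2 - 1.5 * s + 0.6), sq_nonneg (s - 0.5), sq_nonneg (s-0.6), mul_nonneg hs0 (sub_nonneg.2 hs1)]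
    positivity
  have q2 : 0 ≤ s ^ 5 * (0.56 - s) := by
    have : 0 ≤ 0.56 - s := by linarith
    positivity
  have : 0 ≤ s ^ 7 := by positivity
  have : 0 ≤ s ^ 2 := by positivity
  have : 0 ≤ s ^ 3 := by positivity
  have : 0 ≤ s ^ 4 := by positivity
  have : 0 ≤ s ^ 5 := by positivity
  have : 0 ≤ s ^ 6 := by positivity
  norm_num at q1 q2 ⊢
  ring_nf at q1 q2 ⊢
  nlinarith

/-- Region C. -/
lemma cw_regC (u v Y : ℝ) (hu : 0 < u) (hY : Y ^ 2 = u * v)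
    (h1 : 2.41 ≤ exp v) (h2 : exp v ≤ 6.859) :
    sinh Y ^ 2 < (exp v - 1) * cosh (u / 2) ^ 2 := by
  refine (cw_sinh_gm Y (3 * (u / 4)) (4 * (v / 3)) (by rw [hY]; ring)).trans_lt ?_
  have e1 : exp (3 * (u/4)) = exp (u/4) ^ 3 := by rw [← Real.exp_nat_mul]; congr 1
  have e2 : exp (u/2) = exp (u/4) ^ 2 := by rw [← Real.exp_nat_mul]; congr 1 <;> (push_cast; ring)
  have e3 : exp (4 * (v/3)) = exp (v/3) ^ 4 := by rw [← Real.exp_nat_mul]; congr 1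
  have e4 : exp v = exp (v/3) ^ 3 := by rw [← Real.exp_nat_mul]; congr 1 <;> (push_cast; ring)
  have hX : 1 < exp (u/4) := by simpa using hu
  have hZ := exp_pos (v/3)
  rw [Real.sinh_eq, Real.sinh_eq, Real.cosh_eq, Real.exp_neg, Real.exp_neg, Real.exp_neg, e1, e2, e3, e4]
  rw [e4] at h1 h2
  generalize exp (u/4) = X at *
  generalize exp (v/3) = Z at *
  have hZ1 : 1.34 ≤ Z := by
    by_contra! hc
    have : Z ^ 3 < 1.34 ^ 3 := by gcongr
    norm_num at this h1; linarith
  have hZ2 : Z ≤ 1.9 := by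
    by_contra! hc
    have : (1.9:ℝ) ^ 3 < Z ^ 3 := by gcongr
    norm_num at this h2; linarith
  have k1 := cw_rho X hX
  have k2 := cw_kappa Z hZ1 hZ2
  have hX0 : 0 < X := by linarith
  have hX6 : 0 < X * (X ^ 6 - 1) := by
    have := one_lt_pow₀ hX (n := 6) (by norm_num)
    have : 0 < X ^ 6 - 1 := by linarith
    positivity
  rw [← sub_pos]
  have : (Z ^ 3 - 1) * ((X ^ 2 + (X ^ 2)⁻¹) / 2) ^ 2 - (X ^ 3 - (X ^ 3)⁻¹) / 2 * ((Z ^ 4 - (Z ^ 4)⁻¹) / 2)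
    = (Z - 1) * ((Z ^ 4 * (Z ^ 2 + Z + 1)) * (X ^ 4 + 1) ^ 2 - (X * (X ^ 6 - 1)) * ((Z + 1) * (Z ^ 2 + 1) * (Z ^ 4 + 1))) / (4 * X ^ 4 * Z ^ 4) := by
    field_simp
    ring
  rw [this]
  have : 0 < Z - 1 := by linarith
  have : 0 < (Z ^ 4 * (Z ^ 2 + Z + 1)) * (X ^ 4 + 1) ^ 2 - (X * (X ^ 6 - 1)) * ((Z + 1) * (Z ^ 2 + 1) * (Z ^ 4 + 1)) := by
    have a1 := mul_lt_mul_of_pos_left k2 hX6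
    have a2 := mul_le_mul_of_nonneg_left k1 (by positivity : 0 ≤ Z ^ 4 * (Z ^ 2 + Z + 1))
    nlinarith
  positivity

lemma cw_cosh_shift (p q : ℝ) : cosh p * exp (tanh p * q) ≤ cosh (p + q) := by
  have hT1 := (Real.abs_tanh_lt_one p)
  rw [abs_lt] at hT1
  have hc := convexOn_exp.2 (Set.mem_univ q) (Set.mem_univ (-q))
    (by linarith : 0 ≤ (1 + tanh p) / 2) (by linarith : 0 ≤ (1 - tanh p) / 2) (by ring)
  simp only [smul_eq_mul] at hc
  have e : (1 + tanh p) / 2 * q + (1 - tanh p) / 2 * -q = tanh p * q := by ring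
  rw [e] at hc
  rw [Real.cosh_add]
  have hs : sinh p = cosh p * tanh p := by
    rw [Real.tanh_eq_sinh_div_cosh]; field_simp [(Real.cosh_pos p).ne']
  rw [hs]
  have := mul_le_mul_of_nonneg_left hc (Real.cosh_pos p).le
  refine this.trans (le_of_eq ?_)
  rw [Real.cosh_eq q, Real.sinh_eq q]; ring

/-- Region D. -/
lemma cw_regD (u v Y : ℝ) (hu : 0 < u) (hY : Y ^ 2 = u * v)
    (h1 : 6.859 ≤ exp v) (h2 : v + Real.log 2 ≤ u) :
    sinh Y ^ 2 < (exp v - 1) * cosh (u / 2) ^ 2 := by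
  have hv0 : 0 < v := by
    by_contra! hc
    have := Real.exp_le_one_iff.2 hc
    norm_num at h1; linarith
  have hl2 := Real.log_two_gt_d9
  -- boundary point
  obtain ⟨b, hb, hbY⟩ : ∃ b ∈ Set.Icc v u, b * (b + Real.log 2) = u * v := by
    have hvu : v ≤ u := by linarith
    have := intermediate_value_Icc (f := fun b : ℝ => b * (b + Real.log 2)) hvu (by fun_prop)
    exact this ⟨by nlinarith, by nlinarith⟩
  have hvb : v ≤ b := hb.1
  have hb0 : 0 < b := by linarith
  set a := b + Real.log 2 with ha
  have ha0 : 0 < a := by linarith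
  have eA : exp a = 2 * exp b := by rw [ha, Real.exp_add, Real.exp_log (by norm_num)]; ring
  have hA := cw_regA a b Y ha0 hb0 (by rw [hY, ← hbY]; ring) (by rw [eA]; linarith)
  refine hA.trans_le ?_
  have hEv : exp v ≤ exp b := Real.exp_le_exp.2 hvb
  -- monotonicity of b / (1 - exp (-b))
  have k1 : v / (1 - exp (-v)) ≤ b / (1 - exp (-b)) := by
    have p1 : 0 < 1 - exp (-v) := by simpa using hv0
    have p2 : 0 < 1 - exp (-b) := by simpa using hb0
    rw [div_le_div_iff₀ p1 p2]
    have hB := one_add_mul_self_le_rpow_one_add (s := exp (-v) - 1) (by linarith [exp_pos (-v)])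
      (p := b / v) (by rw [le_div_iff₀ hv0]; linarith)
    have : (1 + (exp (-v) - 1)) ^ (b / v) = exp (-b) := by
      rw [add_sub_cancel, ← Real.exp_mul]; congr 1; field_simp
    rw [this] at hB
    have : v * (1 + b / v * (exp (-v) - 1)) ≤ v * exp (-b) := mul_le_mul_of_nonneg_left hB hv0.le
    have e : v * (1 + b / v * (exp (-v) - 1)) = v + b * (exp (-v) - 1) := by field_simp
    rw [e] at this
    linarith
  have k2 : b / (1 - exp (-b)) ≤ a * tanh (a / 2) := by
    have et : tanh (a / 2) = (2 * exp b - 1) / (2 * exp b + 1) := by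
      rw [Real.tanh_eq, Real.exp_neg, ← eA]
      have : exp a = exp (a/2) ^ 2 := by rw [← Real.exp_nat_mul]; congr 1 <;> (push_cast; ring)
      rw [this]
      have := exp_pos (a/2)
      field_simp
    rw [et, Real.exp_neg]
    have hE1 : 6.859 ≤ exp b := h1.trans hEv
    -- e^b large compared with b
    have hEb : b ≤ 1.926 + (exp b - 6.859) / 6.859 := by
      have h3 := Real.add_one_le_exp (b - Real.log 6.859)
      rw [Real.exp_sub, Real.exp_log (by norm_num)] at h3
      have h4 : Real.log 6.859 ≤ 1.926 := by
        rw [Real.log_le_iff_le_exp (by norm_num)]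
        have e : (1.926 : ℝ) = 1 + 0.926 := by norm_num
        rw [e, Real.exp_add]
        have h5 := Real.exp_one_gt_d9
        have h6 : (2.524 : ℝ) ≤ exp 0.926 := by
          refine le_trans ?_ (Real.sum_le_exp_of_nonneg (by norm_num) 8)
          norm_num [Finset.sum_range_succ, Nat.factorial]
        nlinarith
      have h7 : (exp b - 6.859) / 6.859 = exp b / 6.859 - 1 := by
        rw [sub_div, div_self (by norm_num)]
      rw [h7]; linarith
    generalize exp b = E at *
    have hE0 : 1 < E := by norm_num at hE1; linarith
    have : b / (1 - E⁻¹) = b * E / (E - 1) := by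
      have : E - 1 ≠ 0 := by linarith
      have : 1 - E⁻¹ ≠ 0 := by
        have := inv_lt_one_of_one_lt₀ hE0
        linarith
      field_simp
    rw [this, ← mul_div_assoc, div_le_div_iff₀ (by linarith) (by linarith), ha]
    have : b * (4 * E - 1) ≤ Real.log 2 * ((2 * E - 1) * (E - 1)) := by
      have : 0 ≤ (2 * E - 1) * (E - 1) := by nlinarith
      have : 0.693147 * ((2 * E - 1) * (E - 1)) ≤ Real.log 2 * ((2 * E - 1) * (E - 1)) := by
        gcongr; norm_num at hl2 ⊢; linarith
      refine le_trans ?_ this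
      refine (mul_le_mul_of_nonneg_right hEb (by linarith)).trans ?_
      norm_num at hE1 ⊢
      nlinarith
    nlinarith
  set k := (1 - exp (-v))⁻¹ with hk
  have p1 : 0 < 1 - exp (-v) := by simpa using hv0
  have hk1 : 1 ≤ k := by rw [hk, one_le_inv₀ p1]; linarith [exp_pos (-v)]
  have k3 : exp b - 1 ≤ (exp v - 1) * exp ((b - v) * k) := by
    have hB := one_add_mul_self_le_rpow_one_add (s := exp (b - v) - 1) (by linarith [exp_pos (b - v)]) hk1
    rw [add_sub_cancel, ← Real.exp_mul] at hB
    have hEv1 : 0 < exp v - 1 := by simpa using hv0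
    refine le_trans (le_of_eq ?_) (mul_le_mul_of_nonneg_left hB hEv1.le)
    rw [hk, Real.exp_neg, Real.exp_sub]
    have := exp_pos v
    field_simp
    ring
  have k4 := cw_cosh_shift (a/2) (u/2 - a/2)
  rw [add_sub_cancel] at k4
  have hua : u - a = a * (b - v) / v := by field_simp; linarith
  have k5 : (b - v) * k ≤ 2 * (tanh (a/2) * (u/2 - a/2)) := by
    have e : 2 * (tanh (a/2) * (u/2 - a/2)) = (b - v) / v * (a * tanh (a/2)) := by
      have : 2 * (tanh (a/2) * (u/2 - a/2)) = tanh (a/2) * (u - a) := by ring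
      rw [this, hua]; ring
    rw [e]
    have e2 : (b - v) * k = (b - v) / v * (v / (1 - exp (-v))) := by rw [hk]; field_simp
    rw [e2]
    have : 0 ≤ b - v := by linarith
    gcongr
    exact k1.trans k2
  have hEv1 : 0 < exp v - 1 := by simpa using hv0
  calc (exp b - 1) * cosh (a/2) ^ 2 ≤ ((exp v - 1) * exp ((b - v) * k)) * cosh (a/2) ^ 2 := by gcongr
    _ ≤ ((exp v - 1) * exp (2 * (tanh (a/2) * (u/2 - a/2)))) * cosh (a/2) ^ 2 := by gcongr
    _ = (exp v - 1) * (cosh (a/2) * exp (tanh (a/2) * (u/2 - a/2))) ^ 2 := by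
      rw [two_mul, Real.exp_add]; ring
    _ ≤ _ := by
      have := Real.cosh_pos (a/2)
      gcongr

lemma cw_key (u v Y : ℝ) (hu : 0 < u) (hv : 0 < v) (hY : Y ^ 2 = u * v) :
    sinh Y ^ 2 < (exp v - 1) * cosh (u / 2) ^ 2 := by
  rcases lt_or_ge u (v + Real.log 2) with h | h
  · apply cw_regA u v Y hu hv hY
    have := Real.exp_lt_exp.2 h
    rw [Real.exp_add, Real.exp_log (by norm_num)] at this
    linarith
  rcases le_total (exp v) 2.41 with h1 | h1
  · exact cw_regB u v Y hu hv hY h1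
  rcases le_total (exp v) 6.859 with h2 | h2
  · exact cw_regC u v Y hu hY h1 h2
  · exact cw_regD u v Y hu hY h2 h

/-- explicit form of `G` for the dichotomous field -/
def cwPhi (β hf x : ℝ) : ℝ :=
  β / 2 * x ^ 2 - 1 / 2 * (Real.log (cosh (β * (x + hf))) + Real.log (cosh (β * (x - hf))))

lemma cw_G_eq (β hf : ℝ) (ν : Measure ℝ)
    (hν : ν = (1 / 2 : ℝ≥0∞) • Measure.dirac hf + (1 / 2 : ℝ≥0∞) • Measure.dirac (-hf)) :
    G β ν = cwPhi β hf := by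
  funext x
  have hi : ∀ a : ℝ, Integrable (fun h => Real.log (Real.cosh (β * (x + h))))
      ((1 / 2 : ℝ≥0∞) • Measure.dirac a) := fun a =>
    (integrable_dirac (by simp)).smul_measure (by simp)
  rw [G, cwPhi, hν, integral_add_measure (hi _) (hi _), integral_smul_measure, integral_smul_measure,
    integral_dirac, integral_dirac]
  simp only [one_div, ENNReal.toReal_inv, ENNReal.toReal_ofNat, smul_eq_mul, sub_eq_add_neg]
  ring

lemma cwPhi_sub (β hf x : ℝ) : cwPhi β hf x - cwPhi β hf 0 =
    1 / 2 * (β * x ^ 2 - Real.log (1 + sinh (β * x) ^ 2 / cosh (β * hf) ^ 2)) := by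
  have hc := Real.cosh_pos (β * hf)
  have h1 : cosh (β * (x + hf)) * cosh (β * (x - hf)) = cosh (β * hf) ^ 2 + sinh (β * x) ^ 2 := by
    rw [mul_add, mul_sub, Real.cosh_add, Real.cosh_sub]
    have a := Real.cosh_sq (β * x)
    have b := Real.cosh_sq (β * hf)
    have : (cosh (β * x) * cosh (β * hf) + sinh (β * x) * sinh (β * hf)) *
      (cosh (β * x) * cosh (β * hf) - sinh (β * x) * sinh (β * hf))
      = cosh (β * x) ^ 2 * cosh (β * hf) ^ 2 - sinh (β * x) ^ 2 * sinh (β * hf) ^ 2 := by ring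
    rw [this, a, b]; ring
  have h2 : 1 + sinh (β * x) ^ 2 / cosh (β * hf) ^ 2
      = (cosh (β * (x + hf)) * cosh (β * (x - hf))) / cosh (β * hf) ^ 2 := by
    rw [h1]; field_simp
  rw [h2, Real.log_div (mul_pos (Real.cosh_pos _) (Real.cosh_pos _)).ne' (by positivity),
    Real.log_mul (Real.cosh_pos _).ne' (Real.cosh_pos _).ne', Real.log_pow]
  simp only [cwPhi, zero_add, zero_sub, mul_neg, Real.cosh_neg]
  push_cast
  ring

lemma cwPhi_pos (β hf x : ℝ) (hβ : 0 < β) (hhf : 1 / 2 ≤ hf) (hx : x ≠ 0) :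
    0 < cwPhi β hf x - cwPhi β hf 0 := by
  rw [cwPhi_sub]
  have hk := cw_key β (β * x ^ 2) (β * x) hβ (by positivity) (by ring)
  have hm : cosh (β / 2) ≤ cosh (β * hf) := by
    rw [Real.cosh_le_cosh, abs_of_pos (by positivity), abs_of_pos (by nlinarith)]
    nlinarith
  have hc := Real.cosh_pos (β / 2)
  have hE : 0 < exp (β * x ^ 2) - 1 := by
    have : 0 < β * x ^ 2 := by positivity
    simpa using this
  have h1 : sinh (β * x) ^ 2 < (exp (β * x ^ 2) - 1) * cosh (β * hf) ^ 2 :=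
    hk.trans_le (by gcongr)
  have hc' := Real.cosh_pos (β * hf)
  have h2 : 1 + sinh (β * x) ^ 2 / cosh (β * hf) ^ 2 < exp (β * x ^ 2) := by
    rw [← div_lt_iff₀ (by positivity)] at h1
    linarith
  have h3 := (Real.log_lt_iff_lt_exp (by positivity)).2 h2
  linarith

lemma cw_lambda_pos (β hf : ℝ) (hβ : 0 < β) (hhf : 1 / 2 ≤ hf) :
    0 < β - β ^ 2 * (1 - tanh (β * hf) ^ 2) := by
  have hm : cosh (β / 2) ≤ cosh (β * hf) := by
    rw [Real.cosh_le_cosh, abs_of_pos (by positivity), abs_of_pos (by nlinarith)]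
    nlinarith
  have hc := Real.cosh_pos (β / 2)
  have hc' := Real.cosh_pos (β * hf)
  have h1 : β < cosh (β / 2) ^ 2 := by
    have h2 : cosh β = 2 * cosh (β / 2) ^ 2 - 1 := by
      have := Real.cosh_two_mul (β / 2)
      have h3 := Real.sinh_sq (β / 2)
      rw [h3] at this
      rw [show 2 * (β / 2) = β by ring] at this
      linarith
    have h4 : 1 + β ^ 2 / 2 + β ^ 4 / 24 ≤ cosh β := by
      have := sum_le_hasSum (Finset.range 3) (fun n _ => by
        rw [pow_mul]; positivity) (Real.hasSum_cosh β)
      simp [Finset.sum_range_succ, Nat.factorial] at this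
      linarith
    nlinarith [sq_nonneg (β ^ 2 - 2), sq_nonneg (β - 1.5)]
  have h2 : 1 - tanh (β * hf) ^ 2 = 1 / cosh (β * hf) ^ 2 := by
    rw [Real.tanh_eq_sinh_div_cosh, div_pow, Real.sinh_sq]
    field_simp
    ring
  rw [h2]
  have h3 : β < cosh (β * hf) ^ 2 := h1.trans_le (by gcongr)
  have : β * (1 / cosh (β * hf) ^ 2) < 1 := by
    rw [mul_one_div, div_lt_one (by positivity)]; exact h3
  nlinarith

lemma cw_hasDerivAt_logcosh (y : ℝ) : HasDerivAt (fun y => Real.log (cosh y)) (tanh y) y := by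
  have := (Real.hasDerivAt_cosh y).log (Real.cosh_pos y).ne'
  rwa [← Real.tanh_eq_sinh_div_cosh] at this

lemma cw_hasDerivAt_tanh (y : ℝ) : HasDerivAt tanh (1 - tanh y ^ 2) y := by
  have hc := Real.cosh_pos y
  have := (Real.hasDerivAt_sinh y).div (Real.hasDerivAt_cosh y) hc.ne'
  have e : (sinh / cosh : ℝ → ℝ) = tanh := by
    funext z; simp [Real.tanh_eq_sinh_div_cosh]
  rw [e] at this
  refine this.congr_deriv ?_
  rw [Real.tanh_eq_sinh_div_cosh]
  field_simp

def cwPhi' (β hf x : ℝ) : ℝ :=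
  β * x - 1 / 2 * (β * tanh (β * (x + hf)) + β * tanh (β * (x - hf)))

lemma cwPhi_hasDerivAt (β hf x : ℝ) : HasDerivAt (cwPhi β hf) (cwPhi' β hf x) x := by
  have a1 : HasDerivAt (fun x : ℝ => β * (x + hf)) β x := by
    simpa using ((hasDerivAt_id x).add_const hf).const_mul β
  have a2 : HasDerivAt (fun x : ℝ => β * (x - hf)) β x := by
    simpa using ((hasDerivAt_id x).sub_const hf).const_mul β
  have b1 := (cw_hasDerivAt_logcosh (β * (x + hf))).comp x a1
  have b2 := (cw_hasDerivAt_logcosh (β * (x - hf))).comp x a2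
  have c := ((hasDerivAt_pow 2 x).const_mul (β / 2)).sub ((b1.add b2).const_mul (1 / 2))
  refine c.congr_deriv ?_
  simp only [cwPhi']; push_cast; ring

lemma cwPhi'_hasDerivAt_zero (β hf : ℝ) :
    HasDerivAt (cwPhi' β hf) (β - β ^ 2 * (1 - tanh (β * hf) ^ 2)) 0 := by
  have a1 : HasDerivAt (fun x : ℝ => β * (x + hf)) β 0 := by
    simpa using ((hasDerivAt_id (0:ℝ)).add_const hf).const_mul β
  have a2 : HasDerivAt (fun x : ℝ => β * (x - hf)) β 0 := by
    simpa using ((hasDerivAt_id (0:ℝ)).sub_const hf).const_mul β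
  have b1 := (cw_hasDerivAt_tanh (β * (0 + hf))).comp 0 a1
  have b2 := (cw_hasDerivAt_tanh (β * (0 - hf))).comp 0 a2
  have c := ((hasDerivAt_id (0:ℝ)).const_mul β).sub (((b1.const_mul β).add (b2.const_mul β)).const_mul (1 / 2))
  refine c.congr_deriv ?_
  rw [zero_add, zero_sub, mul_neg, Real.tanh_neg]; ring

lemma cwPhi'_zero (β hf : ℝ) : cwPhi' β hf 0 = 0 := by
  simp [cwPhi', Real.tanh_neg]

lemma cw_isMin (β hf : ℝ) (hβ : 0 < β) (hhf : 1 / 2 ≤ hf) (ν : Measure ℝ) (hG : G β ν = cwPhi β hf) :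
    IsMinOfType β ν 0 1 (β - β ^ 2 * (1 - Real.tanh (β * hf) ^ 2)) := by
  have hd : deriv (cwPhi β hf) = cwPhi' β hf := funext fun x => (cwPhi_hasDerivAt β hf x).deriv
  refine ⟨le_rfl, cw_lambda_pos β hf hβ hhf, ?_, ?_⟩
  · intro i h1 h2
    have : i = 1 := by omega
    subst this
    rw [iteratedDeriv_one, hG, hd, cwPhi'_zero]
  · rw [mul_one, iteratedDeriv_succ, iteratedDeriv_one, hG, hd, (cwPhi'_hasDerivAt_zero β hf).deriv]

/-- second order expansion at 0 -/
lemma cwPhi_taylor (β hf : ℝ) (η : ℝ) (hη : 0 < η) : ∃ ρ > 0, ∀ x : ℝ, |x| ≤ ρ →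
    |cwPhi β hf x - cwPhi β hf 0 - (β - β ^ 2 * (1 - tanh (β * hf) ^ 2)) / 2 * x ^ 2| ≤ η * x ^ 2 := by
  set l := β - β ^ 2 * (1 - tanh (β * hf) ^ 2)
  have h := (cwPhi'_hasDerivAt_zero β hf).isLittleO
  have h2 := h.def hη
  rw [Metric.eventually_nhds_iff] at h2
  obtain ⟨ε, hε, h3⟩ := h2
  refine ⟨ε / 2, by positivity, fun x hx => ?_⟩
  have hd : ∀ y ∈ Set.Icc (-|x|) |x|, HasDerivWithinAt (fun y => cwPhi β hf y - l / 2 * y ^ 2)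
      (cwPhi' β hf y - l * y) (Set.Icc (-|x|) |x|) y := by
    intro y _
    have := (cwPhi_hasDerivAt β hf y).sub ((hasDerivAt_pow 2 y).const_mul (l / 2))
    refine HasDerivAt.hasDerivWithinAt ?_
    refine this.congr_deriv ?_
    push_cast; ring
  have hb : ∀ y ∈ Set.Icc (-|x|) |x|, ‖cwPhi' β hf y - l * y‖ ≤ η * |x| := by
    intro y hy
    have hy' : |y| ≤ |x| := abs_le.2 hy
    have := h3 (y := y) (by rw [Real.dist_eq, sub_zero]; linarith)
    simp only [cwPhi'_zero, sub_zero, smul_eq_mul] at this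
    rw [mul_comm y] at this
    refine this.trans ?_
    rw [Real.norm_eq_abs]
    gcongr
  have := (convex_Icc (-|x|) |x|).norm_image_sub_le_of_norm_hasDerivWithin_le hd hb
    (x := 0) (y := x) ⟨by simp, by simp⟩ ⟨neg_abs_le x, le_abs_self x⟩
  simp only [sub_zero, Real.norm_eq_abs] at this
  rw [show η * x ^ 2 = η * |x| * |x| by rw [mul_assoc, abs_mul_abs_self]; ring]
  refine le_trans (le_of_eq ?_) this
  congr 1; ring

lemma cw_logcosh_le (y : ℝ) : Real.log (cosh y) ≤ |y| := by
  rw [Real.log_le_iff_le_exp (Real.cosh_pos y), ← Real.cosh_abs, Real.cosh_eq]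
  have : exp (-|y|) ≤ exp |y| := Real.exp_le_exp.2 (by linarith [abs_nonneg y])
  linarith

lemma cwPhi_quad (β hf : ℝ) (hβ : 0 < β) (hhf : 1 / 2 ≤ hf) : ∃ δ > 0, ∀ x : ℝ,
    δ * x ^ 2 ≤ cwPhi β hf x - cwPhi β hf 0 := by
  have hl := cw_lambda_pos β hf hβ hhf
  obtain ⟨ρ, hρ, h1⟩ := cwPhi_taylor β hf _ (by positivity : 0 < (β - β ^ 2 * (1 - tanh (β * hf) ^ 2)) / 4)
  set l := β - β ^ 2 * (1 - tanh (β * hf) ^ 2)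
  -- large x
  set R := 4 + 4 * hf + ρ with hR
  have h2 : ∀ x : ℝ, R ≤ |x| → β / 4 * x ^ 2 ≤ cwPhi β hf x - cwPhi β hf 0 := by
    intro x hx
    have a1 := cw_logcosh_le (β * (x + hf))
    have a2 := cw_logcosh_le (β * (x - hf))
    rw [abs_mul, abs_of_pos hβ] at a1 a2
    have b1 : |x + hf| ≤ |x| + hf := (abs_add_le _ _).trans (by rw [abs_of_nonneg (by linarith : 0 ≤ hf)])
    have b2 : |x - hf| ≤ |x| + hf := (abs_sub _ _).trans (by rw [abs_of_nonneg (by linarith : 0 ≤ hf)])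
    have b1' := mul_le_mul_of_nonneg_left b1 hβ.le
    have b2' := mul_le_mul_of_nonneg_left b2 hβ.le
    have a0 : 0 ≤ Real.log (cosh (β * hf)) := Real.log_nonneg (Real.one_le_cosh _)
    have e0 : cwPhi β hf 0 = - Real.log (cosh (β * hf)) := by
      simp only [cwPhi, zero_add, zero_sub, mul_neg, Real.cosh_neg]; ring
    rw [e0]
    simp only [cwPhi]
    have : |x| + hf ≤ x ^ 2 / 4 := by
      rw [← sq_abs]; nlinarith
    nlinarith
  have hcont : Continuous (cwPhi β hf) :=
    continuous_iff_continuousAt.2 fun x => (cwPhi_hasDerivAt β hf x).continuousAt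
  -- middle
  have hK : IsCompact {x : ℝ | ρ ≤ |x| ∧ |x| ≤ R} := by
    refine (isCompact_Icc (a := -R) (b := R)).of_isClosed_subset ?_ fun x hx => abs_le.1 hx.2
    exact (isClosed_le continuous_const continuous_abs).inter (isClosed_le continuous_abs continuous_const)
  have hne : ({x : ℝ | ρ ≤ |x| ∧ |x| ≤ R}).Nonempty := ⟨ρ, by simp [abs_of_pos hρ, hR]; linarith⟩
  obtain ⟨x0, hx0, hmin⟩ := hK.exists_isMinOn hne (f := fun x => cwPhi β hf x - cwPhi β hf 0) (by fun_prop)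
  have hR0 : 0 < R := by positivity
  have hm := cwPhi_pos β hf x0 hβ hhf (by rintro rfl; have := hx0.1; simp at this; linarith)
  set m := cwPhi β hf x0 - cwPhi β hf 0
  refine ⟨min (l / 4) (min (β / 4) (m / R ^ 2)), by positivity, fun x => ?_⟩
  rcases le_total |x| ρ with c1 | c1
  · have := (abs_le.1 (h1 x c1)).1
    have : min (l / 4) (min (β / 4) (m / R ^ 2)) * x ^ 2 ≤ l / 4 * x ^ 2 := by
      gcongr; exact min_le_left _ _
    linarith
  rcases le_total R |x| with c2 | c2
  · refine le_trans ?_ (h2 x c2)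
    gcongr; exact (min_le_right _ _).trans (min_le_left _ _)
  · refine le_trans ?_ (hmin ⟨c1, c2⟩ : m ≤ _)
    have : x ^ 2 ≤ R ^ 2 := by rw [← sq_abs x]; gcongr
    calc _ ≤ m / R ^ 2 * R ^ 2 := by
          gcongr; exact (min_le_right _ _).trans (min_le_right _ _)
      _ = m := by field_simp

lemma cw_elog_le (P : Measure ℝ) [IsProbabilityMeasure P] (C : Set ℝ) (a r : ℝ) (ha : 0 < a)
    (h : P.real C ≤ exp (a * r)) : ((a⁻¹ : ℝ) : EReal) * elog (P C) ≤ (r : EReal) := by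
  have hp : 0 < a⁻¹ := inv_pos.2 ha
  unfold elog
  split_ifs with h0 h1
  · rw [EReal.coe_mul_bot_of_pos hp]; exact bot_le
  · exact absurd h1 (measure_ne_top P C)
  · rw [← EReal.coe_mul, EReal.coe_le_coe_iff]
    have hpos : 0 < (P C).toReal := ENNReal.toReal_pos h0 h1
    have : Real.log (P C).toReal ≤ a * r := (Real.log_le_iff_le_exp hpos).2 h
    calc a⁻¹ * Real.log (P C).toReal ≤ a⁻¹ * (a * r) := by gcongr
      _ = r := by field_simp

lemma cw_le_elog (P : Measure ℝ) [IsProbabilityMeasure P] (C : Set ℝ) (a r : ℝ) (ha : 0 < a)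
    (h : exp (a * r) ≤ P.real C) : (r : EReal) ≤ ((a⁻¹ : ℝ) : EReal) * elog (P C) := by
  have hp : 0 < a⁻¹ := inv_pos.2 ha
  have hpos : 0 < (P C).toReal := (exp_pos _).trans_le h
  unfold elog
  split_ifs with h0 h1
  · rw [h0] at hpos; simp at hpos
  · exact absurd h1 (measure_ne_top P C)
  · rw [← EReal.coe_mul, EReal.coe_le_coe_iff]
    have : a * r ≤ Real.log (P C).toReal := (Real.le_log_iff_exp_le hpos).2 h
    calc r = a⁻¹ * (a * r) := by field_simp
      _ ≤ a⁻¹ * Real.log (P C).toReal := by gcongr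

lemma cw_I_coe (x s : ℝ) (hs : 0 < s) :
    ((ENNReal.ofReal (x ^ 2 / (2 * s)) : ℝ≥0∞) : EReal) = ((x ^ 2 / (2 * s) : ℝ) : EReal) := by
  rw [EReal.coe_ennreal_ofReal, max_eq_left (by positivity)]

lemma cw_rate_good (s : ℝ) (hs : 0 < s) :
    LowerSemicontinuous (fun x : ℝ => ENNReal.ofReal (x ^ 2 / (2 * s))) ∧
    ∀ c : ℝ, IsCompact {x : ℝ | ENNReal.ofReal (x ^ 2 / (2 * s)) ≤ ENNReal.ofReal c} := by
  have hc : Continuous (fun x : ℝ => ENNReal.ofReal (x ^ 2 / (2 * s))) :=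
    ENNReal.continuous_ofReal.comp (by fun_prop)
  refine ⟨hc.lowerSemicontinuous, fun c => ?_⟩
  have hcl : IsClosed {x : ℝ | ENNReal.ofReal (x ^ 2 / (2 * s)) ≤ ENNReal.ofReal c} :=
    isClosed_le hc continuous_const
  refine (isCompact_Icc (a := -(1 + 2 * s * max c 0)) (b := 1 + 2 * s * max c 0)).of_isClosed_subset hcl ?_
  intro x hx
  have h1 : x ^ 2 / (2 * s) ≤ max c 0 := by
    have h2 := ENNReal.toReal_mono ENNReal.ofReal_ne_top hx
    rwa [ENNReal.toReal_ofReal (by positivity), ENNReal.toReal_ofReal'] at h2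
  rw [div_le_iff₀ (by positivity)] at h1
  have h0 : 0 ≤ max c 0 := le_max_right _ _
  have h3 : 0 ≤ 2 * s * max c 0 := by positivity
  refine abs_le.1 (abs_le_of_sq_le_sq ?_ (by linarith))
  nlinarith

lemma cw_M_pos (P : Measure ℝ) [IsProbabilityMeasure P] (t : ℝ)
    (hExpInt : Integrable (fun y => exp (t * y)) P) : 0 < ∫ y, exp (t * y) ∂P := by
  have := mgf_pos (X := id) (μ := P) (t := t) hExpInt
  simpa [mgf] using this

lemma cw_M_le (P : ℕ → Measure ℝ) [∀ n, IsProbabilityMeasure (P n)] (a : ℕ → ℝ)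
    (ha : Tendsto a atTop atTop) (s : ℝ) 
    (hExpInt : ∀ n t, Integrable (fun y => exp (t * y)) (P n))
    (hM : ∀ t, Tendsto (fun n => (a n)⁻¹ * Real.log (∫ y, exp (a n * t * y) ∂(P n))) atTop
      (𝓝 (s * t ^ 2 / 2))) (t ε : ℝ) (hε : 0 < ε) :
    ∀ᶠ n in atTop, ∫ y, exp (a n * t * y) ∂(P n) ≤ exp (a n * (s * t ^ 2 / 2 + ε)) := by
  filter_upwards [(hM t).eventually_lt_const (by linarith : s * t ^ 2 / 2 < s * t ^ 2 / 2 + ε),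
    ha.eventually_gt_atTop 0] with n h1 h2
  rw [inv_mul_lt_iff₀ h2, Real.log_lt_iff_lt_exp (cw_M_pos _ _ (hExpInt _ _))] at h1
  exact h1.le

lemma cw_M_ge (P : ℕ → Measure ℝ) [∀ n, IsProbabilityMeasure (P n)] (a : ℕ → ℝ)
    (ha : Tendsto a atTop atTop) (s : ℝ) 
    (hExpInt : ∀ n t, Integrable (fun y => exp (t * y)) (P n))
    (hM : ∀ t, Tendsto (fun n => (a n)⁻¹ * Real.log (∫ y, exp (a n * t * y) ∂(P n))) atTop
      (𝓝 (s * t ^ 2 / 2))) (t ε : ℝ) (hε : 0 < ε) :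
    ∀ᶠ n in atTop, exp (a n * (s * t ^ 2 / 2 - ε)) ≤ ∫ y, exp (a n * t * y) ∂(P n) := by
  filter_upwards [(hM t).eventually_const_lt (by linarith : s * t ^ 2 / 2 - ε < s * t ^ 2 / 2),
    ha.eventually_gt_atTop 0] with n h1 h2
  rw [lt_inv_mul_iff₀ h2, Real.lt_log_iff_exp_lt (cw_M_pos _ _ (hExpInt _ _))] at h1
  exact h1.le

lemma cw_GE_upper (P : ℕ → Measure ℝ) [∀ n, IsProbabilityMeasure (P n)] (a : ℕ → ℝ)
    (ha : Tendsto a atTop atTop) (s : ℝ) (hs : 0 < s)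
    (hExpInt : ∀ n t, Integrable (fun y => exp (t * y)) (P n))
    (hM : ∀ t, Tendsto (fun n => (a n)⁻¹ * Real.log (∫ y, exp (a n * t * y) ∂(P n))) atTop
      (𝓝 (s * t ^ 2 / 2))) (C : Set ℝ) :
    limsup (fun n => ((((a n)⁻¹ : ℝ) : EReal)) * elog (P n C)) atTop ≤
      -(⨅ x ∈ closure C, ((ENNReal.ofReal (x ^ 2 / (2 * s)) : ℝ≥0∞) : EReal)) := by
  rcases C.eq_empty_or_nonempty with rfl | hC
  · simp only [closure_empty, Set.mem_empty_iff_false, not_false_eq_true, iInf_neg, iInf_top,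
      EReal.neg_top]
    refine limsup_le_of_le (by isBoundedDefault) ?_
    filter_upwards [ha.eventually_gt_atTop 0] with n hn
    have hp : 0 < (a n)⁻¹ := inv_pos.2 hn
    simp [elog, EReal.coe_mul_bot_of_pos hp]
  obtain ⟨y, hy, hyd⟩ := isClosed_closure.exists_infDist_eq_dist hC.closure (0:ℝ)
  have hle : ∀ x ∈ C, |y| ≤ |x| := by
    intro x hx
    have := Metric.infDist_le_dist_of_mem (x := (0:ℝ)) (subset_closure hx)
    rw [hyd] at this
    simpa [Real.dist_eq] using this
  set m := |y| with hm
  have hI : (⨅ x ∈ closure C, ((ENNReal.ofReal (x ^ 2 / (2 * s)) : ℝ≥0∞) : EReal))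
      ≤ ((m ^ 2 / (2 * s) : ℝ) : EReal) := by
    refine (iInf₂_le y hy).trans (le_of_eq ?_)
    rw [cw_I_coe _ _ hs, hm, sq_abs]
  refine le_trans ?_ (EReal.neg_le_neg_iff.2 hI)
  rw [← EReal.coe_neg]
  refine EReal.le_of_forall_lt_iff_le.1 fun z hz => ?_
  rw [EReal.coe_lt_coe_iff] at hz
  refine limsup_le_of_le (by isBoundedDefault) ?_
  set ε := (z + m ^ 2 / (2 * s)) / 2 with hε
  have hε0 : 0 < ε := by rw [hε]; linarith
  filter_upwards [cw_M_le P a ha s hExpInt hM (m / s) ε hε0, cw_M_le P a ha s hExpInt hM (-(m / s)) ε hε0,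
    ha.eventually_gt_atTop 0, ha.eventually_ge_atTop (Real.log 2 / ε)] with n h1 h2 h3 h4
  apply cw_elog_le _ _ _ _ h3
  have hm0 : 0 ≤ m := abs_nonneg y
  have c1 := measure_ge_le_exp_mul_mgf (μ := P n) (X := id) (t := a n * (m / s)) m (by positivity) (hExpInt n _)
  have c2 := measure_le_le_exp_mul_mgf (μ := P n) (X := id) (t := a n * (-(m / s))) (-m)
    (by have : 0 ≤ a n * (m / s) := by positivity
        linarith) (hExpInt n _)
  simp only [mgf, id] at c1 c2
  have hsub : C ⊆ {x | m ≤ x} ∪ {x | x ≤ -m} := by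
    intro x hx
    rcases le_abs.1 (hle x hx) with h | h
    · exact Or.inl h
    · right; simp only [Set.mem_ofPred_eq]; linarith
  have c3 : (P n).real C ≤ (P n).real {x | m ≤ x} + (P n).real {x | x ≤ -m} :=
    (measureReal_mono hsub).trans (measureReal_union_le _ _)
  have d1 : exp (-(a n * (m / s)) * m) * ∫ y, exp (a n * (m / s) * y) ∂(P n) ≤
      exp (a n * (-(m ^ 2 / (2 * s)) + ε)) := by
    calc _ ≤ exp (-(a n * (m / s)) * m) * exp (a n * (s * (m / s) ^ 2 / 2 + ε)) := by gcongr
      _ = _ := by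
        rw [← Real.exp_add]; congr 1; field_simp; ring
  have d2 : exp (-(a n * (-(m / s))) * (-m)) * ∫ y, exp (a n * (-(m / s)) * y) ∂(P n) ≤
      exp (a n * (-(m ^ 2 / (2 * s)) + ε)) := by
    calc _ ≤ exp (-(a n * (-(m / s))) * (-m)) * exp (a n * (s * (-(m / s)) ^ 2 / 2 + ε)) := by gcongr
      _ = _ := by
        rw [← Real.exp_add]; congr 1; field_simp; ring
  have d3 : exp (a n * z) = exp (a n * ε) * exp (a n * (-(m ^ 2 / (2 * s)) + ε)) := by
    rw [← Real.exp_add]; congr 1; rw [hε]; ring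
  have d4 : 2 ≤ exp (a n * ε) := by
    rw [← Real.log_le_iff_le_exp (by norm_num)]
    rwa [div_le_iff₀ hε0] at h4
  rw [d3]
  have := exp_pos (a n * (-(m ^ 2 / (2 * s)) + ε))
  nlinarith

lemma cw_GE_lower (P : ℕ → Measure ℝ) [∀ n, IsProbabilityMeasure (P n)] (a : ℕ → ℝ)
    (ha : Tendsto a atTop atTop) (s : ℝ) (hs : 0 < s)
    (hExpInt : ∀ n t, Integrable (fun y => exp (t * y)) (P n))
    (hM : ∀ t, Tendsto (fun n => (a n)⁻¹ * Real.log (∫ y, exp (a n * t * y) ∂(P n))) atTop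
      (𝓝 (s * t ^ 2 / 2))) (C : Set ℝ) :
    -(⨅ x ∈ interior C, ((ENNReal.ofReal (x ^ 2 / (2 * s)) : ℝ≥0∞) : EReal)) ≤
    liminf (fun n => ((((a n)⁻¹ : ℝ) : EReal)) * elog (P n C)) atTop := by
  rw [EReal.neg_le]
  refine le_iInf₂ fun x hx => ?_
  rw [EReal.neg_le, cw_I_coe _ _ hs, ← EReal.coe_neg]
  refine EReal.ge_of_forall_gt_iff_ge.1 fun z hz => ?_
  rw [EReal.coe_lt_coe_iff] at hz
  refine le_liminf_of_le (by isBoundedDefault) ?_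
  obtain ⟨ε0, hε0, hball⟩ := Metric.isOpen_iff.1 isOpen_interior x hx
  set t := x / s with ht
  set gap := -(x ^ 2 / (2 * s)) - z with hgap
  have hgap0 : 0 < gap := by rw [hgap]; linarith
  obtain ⟨ε, hε, hεε, hεg⟩ : ∃ ε > 0, ε ≤ ε0 ∧ |t| * ε + ε ^ 2 / (8 * s) ≤ gap / 2 := by
    have hcont : Tendsto (fun ε : ℝ => |t| * ε + ε ^ 2 / (8 * s)) (𝓝[>] 0) (𝓝 0) := by
      have : Continuous (fun ε : ℝ => |t| * ε + ε ^ 2 / (8 * s)) := by fun_prop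
      have := this.tendsto 0
      simp at this
      exact this.mono_left nhdsWithin_le_nhds
    have h1 := hcont.eventually_lt_const (by linarith : 0 < gap / 2)
    have h2 : ∀ᶠ ε : ℝ in 𝓝[>] 0, ε < ε0 :=
      (eventually_lt_nhds hε0).filter_mono nhdsWithin_le_nhds
    obtain ⟨ε, h3, h4, h5⟩ := (h1.and (h2.and self_mem_nhdsWithin)).exists
    exact ⟨ε, h5, h4.le, h3.le⟩
  set τ := ε / s with hτ
  set γ := ε ^ 2 / (8 * s) with hγ
  have hγ0 : 0 < γ := by positivity
  filter_upwards [cw_M_ge P a ha s hExpInt hM t γ hγ0,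
    cw_M_le P a ha s hExpInt hM (t + τ) (2 * γ) (by positivity),
    cw_M_le P a ha s hExpInt hM (t - τ) (2 * γ) (by positivity),
    ha.eventually_gt_atTop 0, ha.eventually_ge_atTop (Real.log 4 / γ),
    ha.eventually_ge_atTop (Real.log 2 / (gap / 2))] with n h1 h2 h3 h4 h5 h6
  apply cw_le_elog _ _ _ _ h4
  set B := Metric.ball x ε with hB
  have hBC : B ⊆ C := (Metric.ball_subset_ball hεε).trans (hball.trans interior_subset)
  have hPB : (P n).real B ≤ (P n).real C := measureReal_mono hBC
  refine le_trans ?_ hPB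
  set K := exp (a n * (t * x + |t| * ε)) with hK
  have key : ∀ y, exp (a n * t * y) ≤ (B.indicator (fun _ => K) y +
      exp (-(a n * τ * (x + ε))) * exp (a n * (t + τ) * y)) +
      exp (a n * τ * (x - ε)) * exp (a n * (t - τ) * y) := by
    intro y
    have hτ0 : 0 < τ := by positivity
    rw [← Real.exp_add, ← Real.exp_add]
    have e1 := exp_pos (-(a n * τ * (x + ε)) + a n * (t + τ) * y)
    have e2 := exp_pos (a n * τ * (x - ε) + a n * (t - τ) * y)
    by_cases hy : y ∈ B
    · rw [Set.indicator_of_mem hy]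
      have : exp (a n * t * y) ≤ K := by
        rw [hK, Real.exp_le_exp, mul_assoc]
        gcongr
        have hd : |y - x| ≤ ε := by
          rw [hB, Metric.mem_ball, Real.dist_eq] at hy; exact hy.le
        have : t * (y - x) ≤ |t| * ε := by
          calc t * (y - x) ≤ |t * (y - x)| := le_abs_self _
            _ = |t| * |y - x| := abs_mul _ _
            _ ≤ _ := by gcongr
        linarith
      linarith
    · rw [Set.indicator_of_notMem hy]
      have hd : ε ≤ |y - x| := by
        rw [hB, Metric.mem_ball, Real.dist_eq] at hy; exact not_lt.1 hy
      rcases le_abs.1 hd with h | h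
      · have : exp (a n * t * y) ≤ exp (-(a n * τ * (x + ε)) + a n * (t + τ) * y) := by
          rw [Real.exp_le_exp]
          have : 0 ≤ a n * τ * (y - x - ε) := mul_nonneg (by positivity) (by linarith)
          nlinarith
        linarith
      · have : exp (a n * t * y) ≤ exp (a n * τ * (x - ε) + a n * (t - τ) * y) := by
          rw [Real.exp_le_exp]
          have : 0 ≤ a n * τ * (x - ε - y) := mul_nonneg (by positivity) (by linarith)
          nlinarith
        linarith
  have i1 : Integrable (B.indicator (fun _ => K)) (P n) :=
    (integrable_const K).indicator Metric.isOpen_ball.measurableSet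
  have i2 := (hExpInt n (a n * (t + τ))).const_mul (exp (-(a n * τ * (x + ε))))
  have i3 := (hExpInt n (a n * (t - τ))).const_mul (exp (a n * τ * (x - ε)))
  have i12 : Integrable (fun y => B.indicator (fun _ => K) y +
      exp (-(a n * τ * (x + ε))) * exp (a n * (t + τ) * y)) (P n) := i1.add i2
  have hI := integral_mono (hExpInt n (a n * t)) (i12.add i3) key
  have hI2 : ∫ y, ((B.indicator (fun _ => K) y +
      exp (-(a n * τ * (x + ε))) * exp (a n * (t + τ) * y)) +
      exp (a n * τ * (x - ε)) * exp (a n * (t - τ) * y)) ∂(P n) =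
      (P n).real B * K + exp (-(a n * τ * (x + ε))) * ∫ y, exp (a n * (t + τ) * y) ∂(P n)
      + exp (a n * τ * (x - ε)) * ∫ y, exp (a n * (t - τ) * y) ∂(P n) := by
    rw [integral_add i12 i3, integral_add i1 i2, integral_const_mul, integral_const_mul,
      integral_indicator Metric.isOpen_ball.measurableSet, setIntegral_const, smul_eq_mul]
  have hI3 := hI.trans_eq hI2
  have hst : x = s * t := by rw [ht]; field_simp
  have hsτ : ε = s * τ := by rw [hτ]; field_simp
  have hsγ : γ = s * τ ^ 2 / 8 := by rw [hγ, hsτ]; field_simp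
  have f1 : exp (-(a n * τ * (x + ε))) * ∫ y, exp (a n * (t + τ) * y) ∂(P n) ≤
      exp (a n * (s * t ^ 2 / 2 - 2 * γ)) := by
    calc _ ≤ exp (-(a n * τ * (x + ε))) * exp (a n * (s * (t + τ) ^ 2 / 2 + 2 * γ)) := by gcongr
      _ = _ := by
        rw [← Real.exp_add]; congr 1; rw [hsγ, hst, hsτ]; ring
  have f2 : exp (a n * τ * (x - ε)) * ∫ y, exp (a n * (t - τ) * y) ∂(P n) ≤
      exp (a n * (s * t ^ 2 / 2 - 2 * γ)) := by
    calc _ ≤ exp (a n * τ * (x - ε)) * exp (a n * (s * (t - τ) ^ 2 / 2 + 2 * γ)) := by gcongr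
      _ = _ := by
        rw [← Real.exp_add]; congr 1; rw [hsγ, hst, hsτ]; ring
  have f3 : 4 ≤ exp (a n * γ) := by
    rw [← Real.log_le_iff_le_exp (by norm_num)]
    rwa [div_le_iff₀ hγ0] at h5
  have f4 : exp (a n * (s * t ^ 2 / 2 - γ)) = exp (a n * γ) * exp (a n * (s * t ^ 2 / 2 - 2 * γ)) := by
    rw [← Real.exp_add]; congr 1; ring
  have f5 := exp_pos (a n * (s * t ^ 2 / 2 - 2 * γ))
  have f6 : 1 / 2 * exp (a n * (s * t ^ 2 / 2 - γ)) ≤ (P n).real B * K := by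
    nlinarith
  have f7 : 2 ≤ exp (a n * (gap / 2)) := by
    rw [← Real.log_le_iff_le_exp (by norm_num)]
    rwa [div_le_iff₀ (by positivity)] at h6
  have hK0 : 0 < K := exp_pos _
  have f8 : exp (a n * z) * K * 2 ≤ exp (a n * (s * t ^ 2 / 2 - γ)) := by
    calc exp (a n * z) * K * 2 ≤ exp (a n * z) * K * exp (a n * (gap / 2)) := by gcongr
      _ ≤ _ := by
        rw [hK, ← Real.exp_add, ← Real.exp_add, Real.exp_le_exp, ← mul_add, ← mul_add]
        gcongr
        have hz' : z = -(x ^ 2 / (2 * s)) - gap := by rw [hgap]; ring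
        have hx2 : x ^ 2 / (2 * s) = s * t ^ 2 / 2 := by rw [hst]; field_simp
        have hx3 : t * x = s * t ^ 2 := by rw [hst]; ring
        rw [hz', hx2, hx3]
        linarith
  have f9 : exp (a n * z) * K ≤ (P n).real B * K := by linarith
  exact le_of_mul_le_mul_right f9 hK0

lemma cw_GE (P : ℕ → Measure ℝ) [∀ n, IsProbabilityMeasure (P n)] (a : ℕ → ℝ)
    (ha : Tendsto a atTop atTop) (s : ℝ) (hs : 0 < s)
    (hExpInt : ∀ n t, Integrable (fun y => exp (t * y)) (P n))
    (hM : ∀ t, Tendsto (fun n => (a n)⁻¹ * Real.log (∫ y, exp (a n * t * y) ∂(P n))) atTop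
      (𝓝 (s * t ^ 2 / 2))) : HasLDP P a (fun x => ENNReal.ofReal (x ^ 2 / (2 * s))) :=
  ⟨(cw_rate_good s hs).1, (cw_rate_good s hs).2, fun C _ =>
    ⟨cw_GE_lower P a ha s hs hExpInt hM C, cw_GE_upper P a ha s hs hExpInt hM C⟩⟩



lemma cw_laplace_le (a R δ T η lam t : ℝ) (H : ℝ → ℝ) (hHc : Continuous H) (ha : 1 ≤ a)
    (hlam : 0 < lam) (hT : T = t ^ 2 / (2 * lam)) (hδ : 0 < δ) (hη : 0 < η)
    (hR1 : 1 ≤ R) (hR2 : 2 * (1 + |t|) / δ ≤ R)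
    (hU : ∀ z, |z| ≤ R → |H z - lam / 2 * z ^ 2| ≤ η)
    (hQ : ∀ z, δ * z ^ 2 - 1 ≤ H z) :
    Integrable (fun z => exp (-(a * H z) + a * t * z)) ∧
    ∫ z, exp (-(a * H z) + a * t * z) ≤ (2 * R + √(π / (δ / 2))) * exp (a * (T + η)) := by
  have ha0 : 0 < a := by linarith
  have hT0 : 0 ≤ T := by rw [hT]; positivity
  have key : ∀ z, exp (-(a * H z) + a * t * z) ≤
      (Set.Icc (-R) R).indicator (fun _ => exp (a * (T + η))) z + exp (-(δ / 2) * z ^ 2) := by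
    intro z
    by_cases hz : z ∈ Set.Icc (-R) R
    · rw [Set.indicator_of_mem hz]
      have h1 := (abs_le.1 (hU z (abs_le.2 hz))).1
      have h2 : exp (-(a * H z) + a * t * z) ≤ exp (a * (T + η)) := by
        rw [Real.exp_le_exp]
        have : -(a * H z) + a * t * z = a * (-H z + t * z) := by ring
        rw [this]
        refine mul_le_mul_of_nonneg_left ?_ ha0.le
        have h3 : T - (t * z - lam / 2 * z ^ 2) = lam / 2 * (z - t / lam) ^ 2 := by
          rw [hT]; field_simp; ring
        have h4 : 0 ≤ lam / 2 * (z - t / lam) ^ 2 := by positivity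
        linarith
      have := exp_pos (-(δ / 2) * z ^ 2)
      linarith
    · rw [Set.indicator_of_notMem hz, zero_add, Real.exp_le_exp]
      have hz' : R < |z| := by
        by_contra h
        exact hz (abs_le.1 (not_lt.1 h))
      have h1 := hQ z
      have h2 : 2 * (1 + |t|) ≤ δ * |z| := by
        rw [div_le_iff₀ hδ] at hR2
        nlinarith
      have h3 : t * z ≤ |t| * |z| := by rw [← abs_mul]; exact le_abs_self _
      have h4 : z ^ 2 = |z| ^ 2 := (sq_abs z).symm
      have h5 : -(H z) + t * z ≤ -(δ / 2) * z ^ 2 := by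
        have : (1 + |t|) * |z| ≤ δ / 2 * |z| ^ 2 := by nlinarith
        have h6 : 1 ≤ |z| := by linarith
        rw [h4] at h1 ⊢
        nlinarith [mul_nonneg (abs_nonneg t) (abs_nonneg z)]
      have h6 : -(δ / 2) * z ^ 2 ≤ 0 := by nlinarith [sq_nonneg z]
      have h7 : -(a * H z) + a * t * z = a * (-H z + t * z) := by ring
      rw [h7]
      nlinarith
  have i1 : Integrable ((Set.Icc (-R) R).indicator (fun _ : ℝ => exp (a * (T + η)))) :=
    (integrable_indicator_iff measurableSet_Icc).2 (by
      apply integrableOn_const <;> simp)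
  have i2 := integrable_exp_neg_mul_sq (half_pos hδ)
  have i0 : Integrable (fun z => exp (-(a * H z) + a * t * z)) := by
    refine (i1.add i2).mono' (Continuous.aestronglyMeasurable (by fun_prop)) ?_
    filter_upwards with z
    rw [Real.norm_of_nonneg (exp_pos _).le]
    exact key z
  refine ⟨i0, ?_⟩
  have hI := integral_mono i0 (i1.add i2) key
  have hI2 : ∫ z, ((Set.Icc (-R) R).indicator (fun _ => exp (a * (T + η))) z + exp (-(δ / 2) * z ^ 2)) =
      2 * R * exp (a * (T + η)) + √(π / (δ / 2)) := by
    rw [integral_add i1 i2, integral_gaussian, integral_indicator measurableSet_Icc, setIntegral_const,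
      smul_eq_mul, Measure.real, Real.volume_Icc, ENNReal.toReal_ofReal (by linarith)]
    ring
  have hI3 := hI.trans_eq hI2
  have h1 : 1 ≤ exp (a * (T + η)) := Real.one_le_exp (by positivity)
  have h2 : 0 ≤ √(π / (δ / 2)) := Real.sqrt_nonneg _
  nlinarith

lemma cw_laplace_ge (a R w T η lam t : ℝ) (H : ℝ → ℝ) (ha : 1 ≤ a)
    (hlam : 0 < lam) (hT : T = t ^ 2 / (2 * lam)) (hη : 0 < η) (hw : 0 < w)
    (hw2 : lam / 2 * w ^ 2 ≤ η) (hR : |t / lam| + w ≤ R)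
    (hi : Integrable (fun z => exp (-(a * H z) + a * t * z)))
    (hU : ∀ z, |z| ≤ R → |H z - lam / 2 * z ^ 2| ≤ η) :
    w * exp (a * (T - 2 * η)) ≤ ∫ z, exp (-(a * H z) + a * t * z) := by
  have ha0 : 0 < a := by linarith
  have key : ∀ z, (Set.Icc (t / lam) (t / lam + w)).indicator (fun _ => exp (a * (T - 2 * η))) z ≤
      exp (-(a * H z) + a * t * z) := by
    intro z
    by_cases hz : z ∈ Set.Icc (t / lam) (t / lam + w)
    · rw [Set.indicator_of_mem hz, Real.exp_le_exp]
      have hz2 : |z| ≤ R := by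
        have : |z - t / lam| ≤ w := by
          rw [abs_le]; constructor <;> linarith [hz.1, hz.2]
        have h2 : |z| ≤ |z - t / lam| + |t / lam| := by
          have := abs_add_le (z - t / lam) (t / lam)
          simpa using this
        linarith
      have h1 := (abs_le.1 (hU z hz2)).2
      have : -(a * H z) + a * t * z = a * (-H z + t * z) := by ring
      rw [this]
      gcongr
      have h3 : T - (t * z - lam / 2 * z ^ 2) = lam / 2 * (z - t / lam) ^ 2 := by
        rw [hT]; field_simp; ring
      have h4 : lam / 2 * (z - t / lam) ^ 2 ≤ lam / 2 * w ^ 2 := by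
        have : 0 ≤ z - t / lam := by linarith [hz.1]
        have : z - t / lam ≤ w := by linarith [hz.2]
        gcongr
      linarith
    · rw [Set.indicator_of_notMem hz]; exact (exp_pos _).le
  have i1 : Integrable ((Set.Icc (t / lam) (t / lam + w)).indicator (fun _ : ℝ => exp (a * (T - 2 * η)))) :=
    (integrable_indicator_iff measurableSet_Icc).2 (by
      apply integrableOn_const <;> simp)
  have hI := integral_mono i1 hi key
  rw [integral_indicator measurableSet_Icc, setIntegral_const,
      smul_eq_mul, Measure.real, Real.volume_Icc, ENNReal.toReal_ofReal (by linarith)] at hI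
  linarith

lemma cw_laplace (a : ℕ → ℝ) (ha : Tendsto a atTop atTop) (H : ℕ → ℝ → ℝ)
    (hHc : ∀ n, Continuous (H n)) (lam δ t : ℝ) (hlam : 0 < lam) (hδ : 0 < δ)
    (hU : ∀ η > 0, ∀ R > 0, ∀ᶠ n in atTop, ∀ z, |z| ≤ R → |H n z - lam / 2 * z ^ 2| ≤ η)
    (hQ : ∀ᶠ n in atTop, ∀ z, δ * z ^ 2 - 1 ≤ H n z) :
    Tendsto (fun n => (a n)⁻¹ * Real.log (∫ z, exp (-(a n * H n z) + a n * t * z))) atTop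
      (𝓝 (t ^ 2 / (2 * lam))) := by
  set T := t ^ 2 / (2 * lam) with hT
  rw [Metric.tendsto_nhds]
  intro ε hε
  set η := ε / 4 with hη
  have hη0 : 0 < η := by positivity
  obtain ⟨w, hw, hw2⟩ : ∃ w > 0, lam / 2 * w ^ 2 ≤ η := by
    refine ⟨√(2 * η / lam), by positivity, ?_⟩
    rw [Real.sq_sqrt (by positivity)]
    field_simp
    rfl
  set R := 1 + 2 * (1 + |t|) / δ + |t / lam| + w with hR
  have q1 : 0 ≤ 2 * (1 + |t|) / δ := by positivity
  have q2 := abs_nonneg (t / lam)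
  have hR0 : 1 ≤ R := by rw [hR]; linarith
  set K := 2 * R + √(π / (δ / 2)) with hK
  have hK0 : 0 < K := by positivity
  filter_upwards [hU η hη0 R (by linarith), hQ, ha.eventually_ge_atTop 1,
    ha.eventually_ge_atTop (Real.log K / η), ha.eventually_ge_atTop (-Real.log w / η)]
    with n h1 h2 h3 h4 h5
  obtain ⟨i, u⟩ := cw_laplace_le (a n) R δ T η lam t (H n) (hHc n) h3 hlam hT hδ hη0 hR0
    (by rw [hR]; linarith) h1 h2
  have l := cw_laplace_ge (a n) R w T η lam t (H n) h3 hlam hT hη0 hw hw2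
    (by rw [hR]; linarith) i h1
  set J := ∫ z, exp (-(a n * H n z) + a n * t * z) with hJ
  have hJ0 : 0 < J := lt_of_lt_of_le (by positivity) l
  have a0 : 0 < a n := by linarith
  rw [div_le_iff₀ hη0] at h4 h5
  have u2 := Real.log_le_log hJ0 u
  have l2 := Real.log_le_log (by positivity) l
  rw [Real.log_mul (by positivity) (by positivity), Real.log_exp] at u2 l2
  have u3 : (a n)⁻¹ * Real.log J ≤ T + 2 * η := by
    rw [inv_mul_le_iff₀ a0]; rw [← hK] at u2; linarith
  have l3 : T - 3 * η ≤ (a n)⁻¹ * Real.log J := by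
    rw [le_inv_mul_iff₀ a0]; linarith
  rw [Real.dist_eq, abs_lt]
  constructor <;> linarith

lemma cw_gauss (b c : ℝ) (hb : 0 < b) :
    Integrable (fun y : ℝ => exp (-b * y ^ 2 + c * y)) ∧
    ∫ y : ℝ, exp (-b * y ^ 2 + c * y) = √(π / b) * exp (c ^ 2 / (4 * b)) := by
  have h : (fun y : ℝ => exp (-b * y ^ 2 + c * y)) =
      fun y : ℝ => exp (c ^ 2 / (4 * b)) * exp (-b * (y - c / (2 * b)) ^ 2) := by
    funext y
    rw [← Real.exp_add]; congr 1; field_simp; ring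
  rw [h]
  constructor
  · exact ((integrable_exp_neg_mul_sq hb).comp_sub_right (c / (2 * b))).const_mul _
  · rw [integral_const_mul, integral_sub_right_eq_self (fun y : ℝ => exp (-b * y ^ 2)) (c / (2 * b)),
      integral_gaussian, mul_comm]

lemma cw_sum_prod (n : ℕ) (u : Fin n → ℝ) :
    ∑ σ : Fin n → Bool, exp (∑ i, u i * spin (σ i)) = ∏ i, (2 * cosh (u i)) := by
  have : ∀ i, 2 * cosh (u i) = ∑ b : Bool, exp (u i * spin b) := by
    intro i
    simp [spin, Real.cosh_eq]
    ring
  simp_rw [this]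
  rw [Fintype.prod_sum]
  refine Finset.sum_congr rfl fun σ _ => ?_
  rw [Real.exp_sum]

/-- `n G_n`. -/
def cwF (β : ℝ) (h : ℕ → ℝ) (n : ℕ) (x : ℝ) : ℝ :=
  n * β / 2 * x ^ 2 - ∑ i : Fin n, Real.log (Real.cosh (β * (x + h i)))

lemma cwF_continuous (β : ℝ) (h : ℕ → ℝ) (n : ℕ) : Continuous (cwF β h n) := by
  unfold cwF
  refine Continuous.sub (by fun_prop) (continuous_finsetSum _ fun i _ => ?_)
  exact Continuous.log (Real.continuous_cosh.comp (by fun_prop)) fun x => (Real.cosh_pos _).ne'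

lemma cw_HS (β : ℝ) (hβ : 0 < β) (h : ℕ → ℝ) (n : ℕ) (hn : 0 < n) (s : ℝ) :
    2 ^ n * ∫ y : ℝ, exp (-(cwF β h n y) + n * s * y) =
      √(π / (n * β / 2)) * exp (n * s ^ 2 / (2 * β)) *
        ∑ σ : Fin n → Bool, gibbsWeight β h n σ * exp (s * mag σ) := by
  have hn' : (0:ℝ) < n := by exact_mod_cast hn
  have hb : 0 < n * β / 2 := by positivity
  have h1 : ∀ y : ℝ, 2 ^ n * exp (-(cwF β h n y) + n * s * y) =
      ∑ σ : Fin n → Bool, exp (β * ∑ i : Fin n, h i * spin (σ i)) *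
        exp (-(n * β / 2) * y ^ 2 + (β * mag σ + n * s) * y) := by
    intro y
    have e1 : (2:ℝ) ^ n * exp (-(cwF β h n y) + n * s * y) =
        exp (-(n * β / 2) * y ^ 2 + n * s * y) * ∏ i : Fin n, (2 * cosh (β * (y + h i))) := by
      rw [Finset.prod_mul_distrib, Finset.prod_const, Finset.card_univ, Fintype.card_fin]
      have : ∏ i : Fin n, cosh (β * (y + h i)) =
          exp (∑ i : Fin n, Real.log (cosh (β * (y + h i)))) := by
        rw [Real.exp_sum]
        exact Finset.prod_congr rfl fun i _ => (Real.exp_log (Real.cosh_pos _)).symm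
      rw [this, mul_left_comm, ← Real.exp_add]
      congr 2
      unfold cwF; ring
    rw [e1, ← cw_sum_prod, Finset.mul_sum]
    refine Finset.sum_congr rfl fun σ _ => ?_
    rw [← Real.exp_add, ← Real.exp_add]
    congr 1
    have : ∑ i : Fin n, β * (y + h i) * spin (σ i) =
        β * y * mag σ + β * ∑ i : Fin n, h i * spin (σ i) := by
      unfold mag
      rw [Finset.mul_sum, Finset.mul_sum, ← Finset.sum_add_distrib]
      exact Finset.sum_congr rfl fun i _ => by ring
    rw [this]; ring
  rw [← integral_const_mul]
  simp_rw [h1]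
  rw [integral_finsetSum _ fun σ _ => ((cw_gauss _ _ hb).1.const_mul _), Finset.mul_sum]
  refine Finset.sum_congr rfl fun σ _ => ?_
  rw [integral_const_mul, (cw_gauss _ _ hb).2]
  unfold gibbsWeight
  have : ∀ A B C D E : ℝ, A + B = C + D + E →
      exp A * (√(π / (n * β / 2)) * exp B) = √(π / (n * β / 2)) * exp C * (exp D * exp E) := by
    intro A B C D E hh
    have : exp A * exp B = exp C * exp D * exp E := by
      rw [← Real.exp_add, ← Real.exp_add, ← Real.exp_add, hh]
    linear_combination √(π / (n * β / 2)) * this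
  apply this
  field_simp
  ring

lemma cw_logcosh_lip (x y : ℝ) : |log (cosh x) - log (cosh y)| ≤ |x - y| := by
  have key : ∀ x y : ℝ, log (cosh x) - log (cosh y) ≤ |x - y| := by
    intro x y
    have : cosh x ≤ cosh y * exp |x - y| := by
      have h1 : x ≤ y + |x - y| := by linarith [le_abs_self (x - y)]
      have h2 : -x ≤ -y + |x - y| := by linarith [neg_abs_le (x - y)]
      have h3 := Real.exp_le_exp.2 h1
      have h4 := Real.exp_le_exp.2 h2
      rw [Real.exp_add] at h3 h4
      rw [Real.cosh_eq, Real.cosh_eq]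
      linarith
    have h2 := Real.log_le_log (Real.cosh_pos _) this
    rw [Real.log_mul (Real.cosh_pos _).ne' (exp_pos _).ne', Real.log_exp] at h2
    linarith
  rw [abs_le]
  have h1 := key x y
  have h2 := key y x
  rw [abs_sub_comm] at h2
  constructor <;> linarith

lemma cwF_approx (β hf : ℝ) (hβ : 0 < β) (h : ℕ → ℝ) (e : ℕ → ℝ) (n : ℕ)
    (he : ∀ i, e i = 1 ∨ e i = -1) (heh : ∀ i, h i = e i * hf) (x : ℝ) :
    |(cwF β h n x - cwF β h n 0) - n * (cwPhi β hf x - cwPhi β hf 0)| ≤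
      β * |∑ i : Fin n, e i| * |x| := by
  have h1 : ∀ x, ∑ i : Fin n, Real.log (Real.cosh (β * (x + h i))) =
      n * (1 / 2 * (log (cosh (β * (x + hf))) + log (cosh (β * (x - hf))))) +
      (∑ i : Fin n, e i) * (1 / 2 * (log (cosh (β * (x + hf))) - log (cosh (β * (x - hf))))) := by
    intro x
    have : ∀ i : Fin n, Real.log (Real.cosh (β * (x + h i))) =
      (1 / 2 * (log (cosh (β * (x + hf))) + log (cosh (β * (x - hf))))) +
       e i * (1 / 2 * (log (cosh (β * (x + hf))) - log (cosh (β * (x - hf))))) := by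
      intro i
      rw [heh i]
      rcases he i with h | h <;> rw [h]
      · rw [one_mul]; ring
      · rw [neg_one_mul, ← sub_eq_add_neg]; ring
    simp_rw [this]
    rw [Finset.sum_add_distrib, Finset.sum_const, Finset.card_univ, Fintype.card_fin, Finset.sum_mul,
      nsmul_eq_mul]
  have h0 : log (cosh (β * (0 + hf))) = log (cosh (β * (0 - hf))) := by
    rw [← Real.cosh_neg]; congr 2; ring
  have h2 : (cwF β h n x - cwF β h n 0) - n * (cwPhi β hf x - cwPhi β hf 0) =
      -((∑ i : Fin n, e i) * (1 / 2 * ((log (cosh (β * (x + hf))) - log (cosh (β * (0 + hf))))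
        - (log (cosh (β * (x - hf))) - log (cosh (β * (0 - hf))))))) := by
    unfold cwF cwPhi
    rw [h1, h1, h0]; ring
  rw [h2, abs_neg, abs_mul]
  have h3 := cw_logcosh_lip (β * (x + hf)) (β * (0 + hf))
  have h4 := cw_logcosh_lip (β * (x - hf)) (β * (0 - hf))
  have e3 : |β * (x + hf) - β * (0 + hf)| = β * |x| := by
    rw [← abs_of_pos hβ, ← abs_mul, abs_of_pos hβ]; congr 1; ring
  have e4 : |β * (x - hf) - β * (0 - hf)| = β * |x| := by
    rw [← abs_of_pos hβ, ← abs_mul, abs_of_pos hβ]; congr 1; ring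
  rw [e3] at h3
  rw [e4] at h4
  rw [mul_comm β |∑ i : Fin n, e i|, mul_assoc]
  refine mul_le_mul_of_nonneg_left ?_ (abs_nonneg (∑ i : Fin n, e i))
  rw [abs_le] at h3 h4 ⊢
  constructor <;> linarith [h3.1, h3.2, h4.1, h4.2]

lemma cw_w_nonneg (β : ℝ) (h : ℕ → ℝ) (n : ℕ) (σ : Fin n → Bool) : 0 ≤ gibbsWeight β h n σ :=
  (exp_pos _).le

lemma cw_Z_pos (β : ℝ) (h : ℕ → ℝ) (n : ℕ) : 0 < ∑ σ : Fin n → Bool, gibbsWeight β h n σ :=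
  Finset.sum_pos (fun σ _ => exp_pos _) Finset.univ_nonempty

instance cw_gibbs_prob (β : ℝ) (h : ℕ → ℝ) (n : ℕ) : IsProbabilityMeasure (gibbsMeasure β h n) := by
  constructor
  unfold gibbsMeasure
  have hZ := cw_Z_pos β h n
  rw [Measure.smul_apply, Measure.finsetSum_apply, smul_eq_mul]
  simp only [Measure.smul_apply, measure_univ, smul_eq_mul, mul_one]
  rw [← ENNReal.ofReal_sum_of_nonneg (fun σ _ => cw_w_nonneg β h n σ)]
  exact ENNReal.inv_mul_cancel (by simpa using hZ) ENNReal.ofReal_ne_top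

lemma cw_gibbs_integral (β : ℝ) (h : ℕ → ℝ) (n : ℕ) (g : (Fin n → Bool) → ℝ) :
    ∫ σ, g σ ∂(gibbsMeasure β h n) =
      (∑ σ : Fin n → Bool, gibbsWeight β h n σ)⁻¹ * ∑ σ : Fin n → Bool, gibbsWeight β h n σ * g σ := by
  unfold gibbsMeasure
  have hZ := cw_Z_pos β h n
  rw [integral_smul_measure, integral_finsetSum_measure (fun σ _ => (integrable_dirac (by finiteness)).smul_measure ENNReal.ofReal_ne_top),
    ENNReal.toReal_inv, ENNReal.toReal_ofReal hZ.le, smul_eq_mul]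
  congr 1
  refine Finset.sum_congr rfl fun σ _ => ?_
  rw [integral_smul_measure, integral_dirac, ENNReal.toReal_ofReal (cw_w_nonneg β h n σ), smul_eq_mul]

lemma cw_map_integral (β : ℝ) (h : ℕ → ℝ) (n : ℕ) (c t : ℝ) :
    Integrable (fun y => exp (t * y)) ((gibbsMeasure β h n).map (fun σ => mag σ / c)) ∧
    ∫ y, exp (t * y) ∂((gibbsMeasure β h n).map (fun σ => mag σ / c)) =
      (∑ σ : Fin n → Bool, gibbsWeight β h n σ)⁻¹ *
        ∑ σ : Fin n → Bool, gibbsWeight β h n σ * exp (t * (mag σ / c)) := by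
  have hm : AEMeasurable (fun σ : Fin n → Bool => mag σ / c) (gibbsMeasure β h n) :=
    Measurable.aemeasurable (measurable_of_finite _)
  have hc : ∀ ρ : Measure ℝ, AEStronglyMeasurable (fun y : ℝ => exp (t * y)) ρ := fun ρ =>
    Continuous.aestronglyMeasurable (by fun_prop)
  constructor
  · rw [integrable_map_measure (hc _) hm]
    exact Integrable.of_finite
  · rw [integral_map hm (hc _), cw_gibbs_integral]

/-- rescaled Hamiltonian -/
def cwH (β : ℝ) (h : ℕ → ℝ) (α : ℝ) (n : ℕ) (z : ℝ) : ℝ :=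
  (cwF β h n ((n : ℝ) ^ (α - 1) * z) - cwF β h n 0) / (n : ℝ) ^ (2 * α - 1)

lemma cw_pows (α x : ℝ) (hx : 0 < x) : x * (x ^ (α - 1)) ^ 2 = x ^ (2 * α - 1) ∧
    x * x ^ (α - 1) = x ^ α ∧ x ^ (2 * α - 1) / x ^ α = x ^ (α - 1) := by
  have e2 : x * x ^ (α - 1) = x ^ α := by
    rw [mul_comm, ← Real.rpow_add_one hx.ne']; congr 1; ring
  refine ⟨?_, e2, ?_⟩
  · rw [pow_two, ← mul_assoc, e2, ← Real.rpow_add hx]; congr 1; ring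
  · rw [← Real.rpow_sub hx]; congr 1; ring

lemma cw_tilt (β : ℝ) (hβ : 0 < β) (h : ℕ → ℝ) (α : ℝ) (n : ℕ) (hn : 0 < n) :
    ∃ K > 0, ∀ t, 0 < ∫ z, exp (-((n : ℝ) ^ (2 * α - 1) * cwH β h α n z) +
      (n : ℝ) ^ (2 * α - 1) * t * z) ∧
    ∑ σ : Fin n → Bool, gibbsWeight β h n σ * exp (t * (n : ℝ) ^ (α - 1) * mag σ) =
      K * exp (-((n : ℝ) ^ (2 * α - 1) * t ^ 2 / (2 * β))) *
      ∫ z, exp (-((n : ℝ) ^ (2 * α - 1) * cwH β h α n z) + (n : ℝ) ^ (2 * α - 1) * t * z) := by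
  have hn' : (0:ℝ) < n := by exact_mod_cast hn
  obtain ⟨e1, e2, e3⟩ := cw_pows α n hn'
  set r := (n : ℝ) ^ (α - 1) with hr
  have hr0 : 0 < r := Real.rpow_pos_of_pos hn' _
  set a := (n : ℝ) ^ (2 * α - 1) with ha
  have ha0 : 0 < a := Real.rpow_pos_of_pos hn' _
  set A := √(π / (n * β / 2)) with hA
  have hA0 : 0 < A := by positivity
  refine ⟨A⁻¹ * 2 ^ n * r * exp (-(cwF β h n 0)), by positivity, fun t => ?_⟩
  set W := ∑ σ : Fin n → Bool, gibbsWeight β h n σ * exp (t * r * mag σ) with hW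
  set J := ∫ z, exp (-(a * cwH β h α n z) + a * t * z) with hJ
  have hW0 : 0 < W := Finset.sum_pos (fun σ _ => mul_pos (exp_pos _) (exp_pos _)) Finset.univ_nonempty
  have key := cw_HS β hβ h n hn (t * r)
  rw [← hA, ← hW] at key
  have hcv : ∫ y : ℝ, exp (-(cwF β h n y) + n * (t * r) * y) = r * exp (-(cwF β h n 0)) * J := by
    have := Measure.integral_comp_mul_left (fun y : ℝ => exp (-(cwF β h n y) + n * (t * r) * y)) r
    rw [abs_of_pos (inv_pos.2 hr0), smul_eq_mul] at this
    have h2 : ∀ z : ℝ, exp (-(cwF β h n (r * z)) + n * (t * r) * (r * z)) =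
        exp (-(cwF β h n 0)) * exp (-(a * cwH β h α n z) + a * t * z) := by
      intro z
      rw [← Real.exp_add]
      congr 1
      have : a * cwH β h α n z = cwF β h n (r * z) - cwF β h n 0 := by
        unfold cwH
        rw [← ha, ← hr]; field_simp
      rw [this, ← e1]; ring
    simp_rw [h2] at this
    rw [integral_const_mul, ← hJ] at this
    rw [mul_assoc, this]; field_simp
  have e4 : n * (t * r) ^ 2 / (2 * β) = a * t ^ 2 / (2 * β) := by rw [← e1]; ring
  rw [hcv, e4] at key
  have hfin : W = A⁻¹ * 2 ^ n * r * exp (-(cwF β h n 0)) * exp (-(a * t ^ 2 / (2 * β))) * J := by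
    rw [Real.exp_neg (a * t ^ 2 / (2 * β))]
    field_simp
    linear_combination -key
  refine ⟨?_, hfin⟩
  rw [hfin] at hW0
  exact pos_of_mul_pos_right hW0 (by positivity)

lemma cw_mgf_eq (β : ℝ) (hβ : 0 < β) (h : ℕ → ℝ) (α : ℝ) (n : ℕ) (hn : 0 < n) (t : ℝ) :
    ((n : ℝ) ^ (2 * α - 1))⁻¹ * Real.log (∫ y, exp ((n : ℝ) ^ (2 * α - 1) * t * y)
      ∂((gibbsMeasure β h n).map (fun σ => mag σ / (n : ℝ) ^ α))) =
    - (t ^ 2 / (2 * β)) +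
    ((n : ℝ) ^ (2 * α - 1))⁻¹ * Real.log (∫ z, exp (-((n : ℝ) ^ (2 * α - 1) * cwH β h α n z) +
      (n : ℝ) ^ (2 * α - 1) * t * z)) -
    ((n : ℝ) ^ (2 * α - 1))⁻¹ * Real.log (∫ z, exp (-((n : ℝ) ^ (2 * α - 1) * cwH β h α n z) +
      (n : ℝ) ^ (2 * α - 1) * 0 * z)) := by
  have hn' : (0:ℝ) < n := by exact_mod_cast hn
  obtain ⟨e1, e2, e3⟩ := cw_pows α n hn'
  obtain ⟨K, hK, hKt⟩ := cw_tilt β hβ h α n hn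
  obtain ⟨p1, q1⟩ := hKt t
  obtain ⟨p0, q0⟩ := hKt 0
  rw [(cw_map_integral β h n _ _).2]
  have ha0 : 0 < (n : ℝ) ^ (2 * α - 1) := Real.rpow_pos_of_pos hn' _
  have h1 : ∀ σ : Fin n → Bool, (n : ℝ) ^ (2 * α - 1) * t * (mag σ / (n : ℝ) ^ α) =
      t * (n : ℝ) ^ (α - 1) * mag σ := by
    intro σ; rw [← e3]; ring
  simp_rw [h1]
  rw [q1]
  have q0' : ∑ σ : Fin n → Bool, gibbsWeight β h n σ =
      K * ∫ z, exp (-((n : ℝ) ^ (2 * α - 1) * cwH β h α n z) + (n : ℝ) ^ (2 * α - 1) * 0 * z) := by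
    simpa using q0
  rw [q0']
  generalize (∫ z, exp (-((n : ℝ) ^ (2 * α - 1) * cwH β h α n z) + (n : ℝ) ^ (2 * α - 1) * 0 * z)) = J0 at *
  generalize (∫ z, exp (-((n : ℝ) ^ (2 * α - 1) * cwH β h α n z) + (n : ℝ) ^ (2 * α - 1) * t * z)) = J1 at *
  rw [Real.log_mul (by positivity) (by positivity), Real.log_inv, Real.log_mul hK.ne' p0.ne',
    Real.log_mul (by positivity) p1.ne', Real.log_mul hK.ne' (exp_pos _).ne', Real.log_exp]
  field_simp
  ring

lemma cw_mgf_lim (β hf : ℝ) (hβ : 0 < β) (hhf : 1 / 2 ≤ hf) (h e : ℕ → ℝ)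
    (he : ∀ i, e i = 1 ∨ e i = -1) (heh : ∀ i, h i = e i * hf) (α : ℝ) (hα : 1 / 2 < α)
    (hα1 : α < 1)
    (hD : Tendsto (fun n : ℕ => |∑ i : Fin n, e i| / (n : ℝ) ^ α) atTop (𝓝 0)) (t : ℝ) :
    Tendsto (fun n : ℕ => ((n : ℝ) ^ (2 * α - 1))⁻¹ *
      Real.log (∫ y, exp ((n : ℝ) ^ (2 * α - 1) * t * y)
      ∂((gibbsMeasure β h n).map (fun σ => mag σ / (n : ℝ) ^ α)))) atTop
      (𝓝 (((1 - Real.tanh (β * hf) ^ 2) /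
              (1 - β * (1 - Real.tanh (β * hf) ^ 2))) * t ^ 2 / 2)) := by
  have hlam := cw_lambda_pos β hf hβ hhf
  set lam := β - β ^ 2 * (1 - tanh (β * hf) ^ 2) with hlamdef
  have ha : Tendsto (fun n : ℕ => (n : ℝ) ^ (2 * α - 1)) atTop atTop :=
    (tendsto_rpow_atTop (by linarith)).comp tendsto_natCast_atTop_atTop
  have hr : Tendsto (fun n : ℕ => (n : ℝ) ^ (α - 1)) atTop (𝓝 0) := by
    have := (tendsto_rpow_neg_atTop (by linarith : 0 < 1 - α)).comp (tendsto_natCast_atTop_atTop (R := ℝ))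
    rw [neg_sub] at this
    exact this
  have hDβ : Tendsto (fun n : ℕ => β * (|∑ i : Fin n, e i| / (n : ℝ) ^ α)) atTop (𝓝 0) := by
    simpa using hD.const_mul β
  have hHc : ∀ n, Continuous (cwH β h α n) := fun n => by
    unfold cwH
    exact (((cwF_continuous β h n).comp (by fun_prop)).sub continuous_const).div_const _
  have happ : ∀ n : ℕ, 0 < n → ∀ z,
      |cwH β h α n z - ((n : ℝ) ^ (α - 1))⁻¹ ^ 2 *
        (cwPhi β hf ((n : ℝ) ^ (α - 1) * z) - cwPhi β hf 0)| ≤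
        β * (|∑ i : Fin n, e i| / (n : ℝ) ^ α) * |z| := by
    intro n hn z
    have hn' : (0:ℝ) < n := by exact_mod_cast hn
    obtain ⟨e1, e2, e3⟩ := cw_pows α n hn'
    have key := cwF_approx β hf hβ h e n he heh ((n : ℝ) ^ (α - 1) * z)
    unfold cwH
    have hr0 : 0 < (n : ℝ) ^ (α - 1) := Real.rpow_pos_of_pos hn' _
    rw [← e1, ← e2]
    generalize (n : ℝ) ^ (α - 1) = r at *
    rw [abs_mul, abs_of_pos hr0] at key
    have : (cwF β h n (r * z) - cwF β h n 0) / (n * r ^ 2) - r⁻¹ ^ 2 * (cwPhi β hf (r * z) - cwPhi β hf 0)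
      = (n * r ^ 2)⁻¹ * ((cwF β h n (r * z) - cwF β h n 0) - n * (cwPhi β hf (r * z) - cwPhi β hf 0)) := by
      field_simp
    rw [this, abs_mul, abs_of_pos (by positivity), inv_mul_le_iff₀ (by positivity)]
    refine key.trans (le_of_eq ?_)
    field_simp
  obtain ⟨δ, hδ, hδq⟩ := cwPhi_quad β hf hβ hhf
  have hQ : ∀ᶠ n in atTop, ∀ z, δ / 2 * z ^ 2 - 1 ≤ cwH β h α n z := by
    filter_upwards [hDβ.eventually_lt_const (by norm_num : (0:ℝ) < 1),
      hDβ.eventually_lt_const (by positivity : (0:ℝ) < δ / 2), eventually_gt_atTop 0] with n h1 h2 h3 z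
    have hn' : (0:ℝ) < n := by exact_mod_cast h3
    have k1 := (abs_le.1 (happ n h3 z)).1
    have hr0 : 0 < (n : ℝ) ^ (α - 1) := Real.rpow_pos_of_pos hn' _
    have k2 := hδq ((n : ℝ) ^ (α - 1) * z)
    generalize (n : ℝ) ^ (α - 1) = r at *
    have k3 : δ * z ^ 2 ≤ r⁻¹ ^ 2 * (cwPhi β hf (r * z) - cwPhi β hf 0) := by
      calc δ * z ^ 2 = r⁻¹ ^ 2 * (δ * (r * z) ^ 2) := by field_simp
        _ ≤ _ := by gcongr
    have d0 : 0 ≤ β * (|∑ i : Fin n, e i| / (n : ℝ) ^ α) := by positivity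
    generalize β * (|∑ i : Fin n, e i| / (n : ℝ) ^ α) = d at *
    have k4 : |z| ≤ 1 + z ^ 2 := by
      rw [← sq_abs z]; nlinarith [sq_nonneg (|z| - 1), abs_nonneg z]
    have k5 : d * |z| ≤ d + d * z ^ 2 := by nlinarith
    have k6 : d * z ^ 2 ≤ δ / 2 * z ^ 2 := by gcongr
    linarith
  have hU : ∀ η > 0, ∀ R > 0, ∀ᶠ n in atTop, ∀ z, |z| ≤ R →
      |cwH β h α n z - lam / 2 * z ^ 2| ≤ η := by
    intro η hη R hR
    obtain ⟨ρ, hρ, hρt⟩ := cwPhi_taylor β hf (η / (2 * R ^ 2)) (by positivity)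
    filter_upwards [hDβ.eventually_lt_const (by positivity : (0:ℝ) < η / (2 * R)),
      hr.eventually_lt_const (by positivity : (0:ℝ) < ρ / R), eventually_gt_atTop 0] with n h1 h2 h3 z hz
    have hn' : (0:ℝ) < n := by exact_mod_cast h3
    have k1 := happ n h3 z
    have hr0 : 0 < (n : ℝ) ^ (α - 1) := Real.rpow_pos_of_pos hn' _
    have k2 := hρt ((n : ℝ) ^ (α - 1) * z)
    rw [← hlamdef] at k2
    generalize (n : ℝ) ^ (α - 1) = r at *
    have k3 : |r * z| ≤ ρ := by
      rw [abs_mul, abs_of_pos hr0]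
      rw [lt_div_iff₀ hR] at h2
      nlinarith [abs_nonneg z]
    have k4 := k2 k3
    have k5 : |r⁻¹ ^ 2 * (cwPhi β hf (r * z) - cwPhi β hf 0) - lam / 2 * z ^ 2| ≤ η / 2 := by
      have : r⁻¹ ^ 2 * (cwPhi β hf (r * z) - cwPhi β hf 0) - lam / 2 * z ^ 2 =
        r⁻¹ ^ 2 * (cwPhi β hf (r * z) - cwPhi β hf 0 - lam / 2 * (r * z) ^ 2) := by field_simp
      rw [this, abs_mul, abs_of_pos (by positivity)]
      calc _ ≤ r⁻¹ ^ 2 * (η / (2 * R ^ 2) * (r * z) ^ 2) := by gcongr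
        _ = η / (2 * R ^ 2) * |z| ^ 2 := by rw [sq_abs]; field_simp
        _ ≤ η / (2 * R ^ 2) * R ^ 2 := by gcongr
        _ = η / 2 := by field_simp
    have d0 : 0 ≤ β * (|∑ i : Fin n, e i| / (n : ℝ) ^ α) := by positivity
    generalize β * (|∑ i : Fin n, e i| / (n : ℝ) ^ α) = d at *
    have k6 : d * |z| ≤ η / 2 := by
      calc d * |z| ≤ η / (2 * R) * R := by gcongr
        _ = _ := by field_simp
    rw [abs_le] at *
    constructor <;> linarith [k1.1, k1.2, k5.1, k5.2]
  have L1 := cw_laplace _ ha (cwH β h α) hHc lam (δ / 2) t hlam (by positivity) hU hQ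
  have L0 := cw_laplace _ ha (cwH β h α) hHc lam (δ / 2) 0 hlam (by positivity) hU hQ
  have L := (L1.const_add (-(t ^ 2 / (2 * β)))).sub L0
  have hval : -(t ^ 2 / (2 * β)) + t ^ 2 / (2 * lam) - 0 ^ 2 / (2 * lam) =
      ((1 - Real.tanh (β * hf) ^ 2) /
              (1 - β * (1 - Real.tanh (β * hf) ^ 2))) * t ^ 2 / 2 := by
    have hl : lam = β * (1 - β * (1 - Real.tanh (β * hf) ^ 2)) := by rw [hlamdef]; ring
    have hc : 0 < 1 - β * (1 - Real.tanh (β * hf) ^ 2) := by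
      rw [hl] at hlam; exact pos_of_mul_pos_right hlam hβ.le
    rw [hl]
    generalize Real.tanh (β * hf) ^ 2 = T at *
    have := hc.ne'
    field_simp
    ring
  rw [hval] at L
  refine L.congr' ?_
  filter_upwards [eventually_gt_atTop 0] with n hn
  rw [cw_mgf_eq β hβ h α n hn t]

lemma cw_mdp (β hf : ℝ) (hβ : 0 < β) (hhf : 1 / 2 ≤ hf) (h e : ℕ → ℝ)
    (he : ∀ i, e i = 1 ∨ e i = -1) (heh : ∀ i, h i = e i * hf) (α : ℝ) (hα : 1 / 2 < α)
    (hα1 : α < 1)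
    (hD : Tendsto (fun n : ℕ => |∑ i : Fin n, e i| / (n : ℝ) ^ α) atTop (𝓝 0)) :
    HasLDP
          (fun n => (gibbsMeasure β h n).map (fun σ => mag σ / (n : ℝ) ^ α))
          (fun n => (n : ℝ) ^ (2 * α - 1))
          (fun x => ENNReal.ofReal (x ^ 2 /
            (2 * ((1 - Real.tanh (β * hf) ^ 2) /
              (1 - β * (1 - Real.tanh (β * hf) ^ 2)))))) := by
  have ha : Tendsto (fun n : ℕ => (n : ℝ) ^ (2 * α - 1)) atTop atTop :=
    (tendsto_rpow_atTop (by linarith)).comp tendsto_natCast_atTop_atTop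
  have hlam := cw_lambda_pos β hf hβ hhf
  have hs : 0 < (1 - Real.tanh (β * hf) ^ 2) / (1 - β * (1 - Real.tanh (β * hf) ^ 2)) := by
    apply div_pos
    · have := Real.tanh_sq_lt_one (β * hf)
      linarith
    · have hl : β - β ^ 2 * (1 - tanh (β * hf) ^ 2) = β * (1 - β * (1 - Real.tanh (β * hf) ^ 2)) := by
        ring
      rw [hl] at hlam; exact pos_of_mul_pos_right hlam hβ.le
  have : ∀ n : ℕ, IsProbabilityMeasure
      ((gibbsMeasure β h n).map (fun σ => mag σ / (n : ℝ) ^ α)) := fun n =>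
    Measure.isProbabilityMeasure_map (Measurable.aemeasurable (measurable_of_finite _))
  exact cw_GE _ _ ha _ hs (fun n t => (cw_map_integral β h n _ _).1)
    (fun t => cw_mgf_lim β hf hβ hhf h e he heh α hα hα1 hD t)

lemma cw_ae_values (hf : ℝ) (ν : Measure ℝ) [IsProbabilityMeasure ν]
    (hν : ν = (1 / 2 : ℝ≥0∞) • Measure.dirac hf + (1 / 2 : ℝ≥0∞) • Measure.dirac (-hf))
    (μ : Measure (ℕ → ℝ)) (hμ : IsProductMeasure ν μ) :
    ∀ᵐ h ∂μ, ∀ i, h i = hf ∨ h i = -hf := by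
  rw [ae_all_iff]
  intro i
  have h1 : ∀ᵐ x ∂ν, x = hf ∨ x = -hf := by
    rw [hν, ae_add_measure_iff]
    have hm : MeasurableSet {x : ℝ | x = hf ∨ x = -hf} :=
      (measurableSet_singleton hf).union (measurableSet_singleton (-hf))
    refine ⟨Measure.ae_smul_measure ?_ _, Measure.ae_smul_measure ?_ _⟩
    · rw [ae_dirac_iff hm]; simp
    · rw [ae_dirac_iff hm]; simp
  have h2 := (measurePreserving_eval (fun _ : Fin (i + 1) => ν) (Fin.last i)).quasiMeasurePreserving.ae h1
  rw [← hμ (i + 1)] at h2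
  have h3 := ae_of_ae_map (Measurable.aemeasurable (by fun_prop)) h2
  simpa using h3

lemma cw_mgf_D (hf : ℝ) (hf0 : 0 < hf) (ν : Measure ℝ) [IsProbabilityMeasure ν]
    (hν : ν = (1 / 2 : ℝ≥0∞) • Measure.dirac hf + (1 / 2 : ℝ≥0∞) • Measure.dirac (-hf))
    (μ : Measure (ℕ → ℝ)) (hμ : IsProductMeasure ν μ) (n : ℕ) (t : ℝ) :
    Integrable (fun h : ℕ → ℝ => exp (t * ∑ i : Fin n, h i / hf)) μ ∧
    mgf (fun h : ℕ → ℝ => ∑ i : Fin n, h i / hf) μ t ≤ exp (n * t ^ 2 / 2) := by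
  have hm : AEMeasurable (fun (h : ℕ → ℝ) (i : Fin n) => h (i : ℕ)) μ :=
    Measurable.aemeasurable (by fun_prop)
  have i1 : Integrable (fun x : ℝ => exp (t * (x / hf))) ν := by
    rw [hν]
    refine Integrable.add_measure ?_ ?_
    · exact (integrable_dirac (by finiteness)).smul_measure (by norm_num)
    · exact (integrable_dirac (by finiteness)).smul_measure (by norm_num)
  have hv : ∫ x : ℝ, exp (t * (x / hf)) ∂ν = cosh t := by
    rw [hν, integral_add_measure, integral_smul_measure, integral_smul_measure, integral_dirac,
      integral_dirac, Real.cosh_eq]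
    · rw [neg_div, div_self hf0.ne']
      simp
      ring
    · exact (integrable_dirac (by finiteness)).smul_measure (by norm_num)
    · exact (integrable_dirac (by finiteness)).smul_measure (by norm_num)
  have e1 : ∀ x : Fin n → ℝ, exp (t * ∑ i : Fin n, x i / hf) = ∏ i, exp (t * (x i / hf)) := by
    intro x
    rw [Finset.mul_sum, Real.exp_sum]
  have i2 : Integrable (fun x : Fin n → ℝ => exp (t * ∑ i : Fin n, x i / hf))
      (Measure.pi fun _ : Fin n => ν) := by
    simp_rw [e1]
    exact Integrable.fintype_prod (fun _ => i1)
  have hc : ∀ ρ : Measure (Fin n → ℝ), AEStronglyMeasurable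
      (fun x : Fin n → ℝ => exp (t * ∑ i : Fin n, x i / hf)) ρ := fun ρ =>
    Continuous.aestronglyMeasurable (by fun_prop)
  constructor
  · rw [← hμ n, integrable_map_measure (hc _) hm] at i2
    exact i2
  · have : mgf (fun h : ℕ → ℝ => ∑ i : Fin n, h i / hf) μ t = cosh t ^ n := by
      unfold mgf
      have h1 := integral_map hm (hc (μ.map (fun (h : ℕ → ℝ) (i : Fin n) => h (i : ℕ))))
      rw [← h1, hμ n]
      simp_rw [e1]
      rw [integral_fintype_prod_eq_prod (fun (_ : Fin n) (x : ℝ) => exp (t * (x / hf)))]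
      simp [hv]
    rw [this]
    calc cosh t ^ n ≤ exp (t ^ 2 / 2) ^ n := by
          have := (Real.cosh_pos t).le
          gcongr
          exact Real.cosh_le_exp_half_sq t
      _ = _ := by rw [← Real.exp_nat_mul]; congr 1; ring

lemma cw_tail (hf : ℝ) (hf0 : 0 < hf) (ν : Measure ℝ) [IsProbabilityMeasure ν]
    (hν : ν = (1 / 2 : ℝ≥0∞) • Measure.dirac hf + (1 / 2 : ℝ≥0∞) • Measure.dirac (-hf))
    (μ : Measure (ℕ → ℝ)) [IsProbabilityMeasure μ] (hμ : IsProductMeasure ν μ) (n : ℕ) (hn : 0 < n) :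
    μ {h | 2 * √(n * Real.log n) ≤ |∑ i : Fin n, h i / hf|} ≤ ENNReal.ofReal (2 * (1 / (n:ℝ) ^ 2)) := by
  have hn' : (0:ℝ) < n := by exact_mod_cast hn
  have hn1 : (1:ℝ) ≤ n := by exact_mod_cast hn
  have hlog : 0 ≤ Real.log n := Real.log_nonneg hn1
  set x := 2 * √(n * Real.log n) with hx
  have hx0 : 0 ≤ x := by positivity
  have hx2 : x ^ 2 = 4 * (n * Real.log n) := by
    rw [hx, mul_pow, Real.sq_sqrt (by positivity)]; norm_num
  set t := x / n with ht
  have ht0 : 0 ≤ t := by positivity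
  obtain ⟨i1, m1⟩ := cw_mgf_D hf hf0 ν hν μ hμ n t
  obtain ⟨i2, m2⟩ := cw_mgf_D hf hf0 ν hν μ hμ n (-t)
  have c1 := measure_ge_le_exp_mul_mgf (μ := μ) x ht0 i1
  have c2 := measure_le_le_exp_mul_mgf (μ := μ) (-x) (by linarith : -t ≤ 0) i2
  have hb : exp (-t * x) * exp (n * t ^ 2 / 2) = 1 / (n:ℝ) ^ 2 := by
    rw [← Real.exp_add]
    have : -t * x + n * t ^ 2 / 2 = -(2 * Real.log n) := by
      rw [ht]; field_simp; rw [hx2]; ring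
    rw [this, Real.exp_neg, mul_comm, Real.exp_mul, Real.exp_log hn']
    norm_num
  have d1 := c1.trans (mul_le_mul_of_nonneg_left m1 (exp_pos _).le)
  have d2 := c2.trans (mul_le_mul_of_nonneg_left m2 (exp_pos _).le)
  rw [hb] at d1
  rw [show -(-t) * -x = -t * x by ring, neg_sq, hb] at d2
  have hsub : {h : ℕ → ℝ | x ≤ |∑ i : Fin n, h i / hf|} ⊆
      {h | x ≤ ∑ i : Fin n, h i / hf} ∪ {h | ∑ i : Fin n, h i / hf ≤ -x} := by
    intro h hh
    rcases le_abs.1 (show x ≤ |∑ i : Fin n, h i / hf| from hh) with h1 | h1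
    · exact Or.inl h1
    · exact Or.inr (show ∑ i : Fin n, h i / hf ≤ -x by linarith)
  have hr : μ.real {h : ℕ → ℝ | x ≤ |∑ i : Fin n, h i / hf|} ≤ 2 * (1 / (n:ℝ) ^ 2) := by
    have := (measureReal_mono (μ := μ) hsub).trans (measureReal_union_le _ _)
    linarith
  rw [← ENNReal.ofReal_toReal (measure_ne_top μ _)]
  exact ENNReal.ofReal_le_ofReal hr

lemma cw_ae_D (hf : ℝ) (hf0 : 0 < hf) (ν : Measure ℝ) [IsProbabilityMeasure ν]
    (hν : ν = (1 / 2 : ℝ≥0∞) • Measure.dirac hf + (1 / 2 : ℝ≥0∞) • Measure.dirac (-hf))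
    (μ : Measure (ℕ → ℝ)) [IsProbabilityMeasure μ] (hμ : IsProductMeasure ν μ) :
    ∀ᵐ h ∂μ, ∀ α : ℝ, 1 / 2 < α →
      Tendsto (fun n : ℕ => |∑ i : Fin n, h i / hf| / (n : ℝ) ^ α) atTop (𝓝 0) := by
  have hsum : Summable (fun n : ℕ => 2 * (1 / ((n + 1 : ℕ) : ℝ) ^ 2)) :=
    ((summable_nat_add_iff 1).2 (Real.summable_one_div_nat_pow.2 (by norm_num : 1 < 2))).mul_left 2
  have hBC : ∑' n : ℕ, μ {h | 2 * √((n + 1 : ℕ) * Real.log (n + 1 : ℕ)) ≤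
      |∑ i : Fin (n + 1), h i / hf|} ≠ ∞ := by
    refine ne_top_of_le_ne_top ?_ (ENNReal.tsum_le_tsum fun n =>
      cw_tail hf hf0 ν hν μ hμ (n + 1) (Nat.succ_pos n))
    rw [← ENNReal.ofReal_tsum_of_nonneg (fun n => by positivity) hsum]
    exact ENNReal.ofReal_ne_top
  filter_upwards [ae_eventually_notMem hBC] with h hh α hα
  rw [← tendsto_add_atTop_iff_nat 1]
  have hlim : Tendsto (fun n : ℕ => 2 * √(Real.log (n + 1 : ℕ) / ((n + 1 : ℕ) : ℝ) ^ (2 * α - 1)))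
      atTop (𝓝 0) := by
    have h1 := (isLittleO_log_rpow_atTop (by linarith : 0 < 2 * α - 1)).tendsto_div_nhds_zero
    have h2 := h1.comp (tendsto_natCast_atTop_atTop.comp (tendsto_add_atTop_nat 1))
    have h3 := ((Real.continuous_sqrt.tendsto 0).comp h2).const_mul 2
    simp only [Real.sqrt_zero, mul_zero] at h3
    exact h3
  refine tendsto_of_tendsto_of_tendsto_of_le_of_le' tendsto_const_nhds hlim
    (Eventually.of_forall fun n => by positivity) ?_
  filter_upwards [hh] with n hn
  have hn1 : |∑ i : Fin (n + 1), h i / hf| < 2 * √((n + 1 : ℕ) * Real.log (n + 1 : ℕ)) := not_le.1 hn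
  have hm : (0:ℝ) < ((n + 1 : ℕ) : ℝ) := by positivity
  generalize ((n + 1 : ℕ) : ℝ) = m at *
  have hp : 0 < m ^ α := Real.rpow_pos_of_pos hm _
  rw [div_le_iff₀ hp]
  refine hn1.le.trans (le_of_eq ?_)
  have : m * Real.log m = (Real.log m / m ^ (2 * α - 1)) * (m ^ α) ^ 2 := by
    have e : (m ^ α) ^ 2 = m ^ (2 * α - 1) * m := by
      rw [← Real.rpow_natCast, ← Real.rpow_mul hm.le, ← Real.rpow_add_one hm.ne']
      congr 1; push_cast; ring
    have := (Real.rpow_pos_of_pos hm (2 * α - 1)).ne'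
    rw [e]; field_simp
  rw [this, Real.sqrt_mul' _ (by positivity), Real.sqrt_sq hp.le]
  ring

/-- MDP for the Curie-Weiss model with dichotomous external field, large field case
(Example 4.2 (i) of the paper). -/
theorem curie_weiss_dichotomous_field
    (β : ℝ) (hβ : 0 < β) (hf : ℝ) (hhf : 1 / 2 ≤ hf)
    (ν : Measure ℝ)
    (hν : ν = (1 / 2 : ℝ≥0∞) • Measure.dirac hf + (1 / 2 : ℝ≥0∞) • Measure.dirac (-hf))
    (μ : Measure (ℕ → ℝ)) [IsProbabilityMeasure μ] (hμ : IsProductMeasure ν μ) :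
    (∀ x : ℝ, x ≠ 0 → G β ν 0 < G β ν x) ∧
      IsMinOfType β ν 0 1 (β - β ^ 2 * (1 - Real.tanh (β * hf) ^ 2)) ∧
      ∀ᵐ h ∂μ, ∀ α : ℝ, 1 / 2 < α → α < 1 →
        HasLDP
          (fun n => (gibbsMeasure β h n).map (fun σ => mag σ / (n : ℝ) ^ α))
          (fun n => (n : ℝ) ^ (2 * α - 1))
          (fun x => ENNReal.ofReal (x ^ 2 /
            (2 * ((1 - Real.tanh (β * hf) ^ 2) /
              (1 - β * (1 - Real.tanh (β * hf) ^ 2)))))) := by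
  have hf0 : 0 < hf := by linarith
  have : IsProbabilityMeasure ν := by
    constructor
    rw [hν]
    simp [ENNReal.inv_two_add_inv_two]
  have hG := cw_G_eq β hf ν hν
  refine ⟨fun x hx => ?_, cw_isMin β hf hβ hhf ν hG, ?_⟩
  · rw [hG]
    have := cwPhi_pos β hf x hβ hhf hx
    linarith
  · filter_upwards [cw_ae_values hf ν hν μ hμ, cw_ae_D hf hf0 ν hν μ hμ] with h h1 h2 α hα hα1
    refine cw_mdp β hf hβ hhf h (fun i => h i / hf) (fun i => ?_) (fun i => ?_) α hα hα1 (h2 α hα)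
    · rcases h1 i with h3 | h3 <;> rw [h3]
      · left; exact div_self hf0.ne'
      · right; rw [neg_div, div_self hf0.ne']
    · field_simp
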